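/- Each (state, position) pair is executed at most once by Memo-at (Lemma 12): For every run s of an execution of Memo-at, every state q ∈ P0, and every position i ∈ {0, …, |w|}, the element C(q, i) appears at most once in s. -/

import Mathlib

namespace RegexMemo

/-! ## Generic runs, `φ`, `sub`, `sub*` -/

variable {α : Type}

/-- `φ_s(ℓ, n)`: the index of the result value of the call at index `ℓ`. -/
def phiAux (isRet : α → Bool) (s : List α) (ℓ n : ℕ) : Option ℕ :=
  match h : s[ℓ]? with
  | none => none
  | some e =>
    if isRet e then
      if n ≤ 1 then some ℓ
      else phiAux isRet s (ℓ + 1) (n - 1)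
    else phiAux isRet s (ℓ + 1) (n + 1)
termination_by s.length - ℓ
decreasing_by
  all_goals
    have hl : ℓ < s.length := by
      by_contra hc
      have : s[ℓ]? = none := List.getElem?_eq_none (by omega)
      simp [this] at h
    omega

/-- `φ_s(ℓ) = φ_s(ℓ, 0)`. -/
def phi (isRet : α → Bool) (s : List α) (ℓ : ℕ) : Option ℕ := phiAux isRet s ℓ 0

/-- `sub(s, ℓ)`: replace the memoization-table invocation at index `ℓ` (an element
`M(q,i)` together with its immediately following result) by `C(q,i)` followed by the
subsequence `s[ℓ'+1] … s[φ_s(ℓ')]`, where `ℓ'` is the first index with `s[ℓ'] = C(q,i)`.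
Here `m2c` maps a memoization element `M(q,i)` to the corresponding call element `C(q,i)`
(and everything else to `none`), and `isRet` recognizes result elements. -/
def subExpand [DecidableEq α] (m2c : α → Option α) (isRet : α → Bool)
    (s : List α) (ℓ : ℕ) : Option (List α) :=
  match s[ℓ]? with
  | some e =>
    match m2c e with
    | some c =>
      match s.findIdx? (· == c) with
      | some ℓ' =>
        match phi isRet s ℓ' with
        | some m =>
          some (s.take ℓ ++ [c] ++ ((s.drop (ℓ' + 1)).take (m - ℓ')) ++ s.drop (ℓ + 2))
        | none => none
      | none => none
    | none => none
  | none => none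

/-- `sub*`: repeatedly locate the first memoization element and expand it,
until no memoization element remains. `SubStar m2c isRet s t` means `sub*(s) = t`. -/
inductive SubStar [DecidableEq α] (m2c : α → Option α) (isRet : α → Bool) :
    List α → List α → Prop where
  | done {s : List α} : s.findIdx? (fun e => (m2c e).isSome) = none →
      SubStar m2c isRet s s
  | step {s s' t : List α} {ℓ : ℕ} :
      s.findIdx? (fun e => (m2c e).isSome) = some ℓ →
      subExpand m2c isRet s ℓ = some s' →
      SubStar m2c isRet s' t →
      SubStar m2c isRet s t

/-- The number of (recursive) calls recorded in a run: the number of `C`/`M` elements. -/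
def callCount (isCall : α → Bool) (s : List α) : ℕ := (s.filter isCall).length

variable {Sigma S : Type}

/-- Results of backtracking matching: `SuccessAt i'` or `Failure`. -/
inductive Result : Type where
  | successAt : ℕ → Result
  | failure : Result
deriving DecidableEq

/-! ## Plain NFAs -/

/-- Transitions of a plain NFA. -/
inductive Trans (Sigma S : Type) : Type where
  | eps : S → Trans Sigma S
  | branch : S → S → Trans Sigma S
  | char : Sigma → S → Trans Sigma S

/-- A (plain) NFA over the alphabet `Sigma` with (finite) state type `S`:
an initial state, a set of accepting states, and a transition function
(whose value is only relevant on non-accepting states). -/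
structure NFA (Sigma S : Type) where
  q0 : S
  F : Set S
  T : S → Trans Sigma S

/-- One ε-step: an `Eps` or `Branch` transition of a non-accepting state. -/
def NFA.epsStep (A : NFA Sigma S) (q q' : S) : Prop :=
  q ∉ A.F ∧ (A.T q = Trans.eps q' ∨ (∃ q'', A.T q = Trans.branch q' q'') ∨
    (∃ q'', A.T q = Trans.branch q'' q'))

/-- The NFA has no ε-loops. -/
def NFA.NoEpsLoops (A : NFA Sigma S) : Prop :=
  ∀ q : S, ¬ Relation.TransGen A.epsStep q q

open Classical in
/-- The in-degree `#in(q)` of a state of a plain NFA. -/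
noncomputable def NFA.inDeg [Fintype S] (A : NFA Sigma S) (q : S) : ℕ :=
  (Finset.univ.filter fun q' : S => q' ∉ A.F ∧ A.T q' = Trans.eps q).card +
  (Finset.univ.filter fun q' : S => q' ∉ A.F ∧ ∃ σ, A.T q' = Trans.char σ q).card +
  (Finset.univ.filter fun q' : S => q' ∉ A.F ∧ ∃ q'', A.T q' = Trans.branch q q'').card +
  (Finset.univ.filter fun q' : S => q' ∉ A.F ∧ ∃ q'', A.T q' = Trans.branch q'' q).card +
  (if q = A.q0 then 1 else 0)

/-- The maximal in-degree `#in(A)` of a plain NFA. -/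
noncomputable def NFA.inDegMax [Fintype S] (A : NFA Sigma S) : ℕ :=
  Finset.univ.sup fun q : S => A.inDeg q

/-- Elements of runs of `Match`/`Memo`: calls `C(q,i)`, memoization-table invocations
`M(q,i)`, and results `S(i')` and `F`. -/
inductive RunElem (S : Type) : Type where
  | call : S → ℕ → RunElem S
  | memo : S → ℕ → RunElem S
  | succ : ℕ → RunElem S
  | fail : RunElem S
deriving DecidableEq

/-- The run element recording the return of a result. -/
def Result.elem {S : Type} : Result → RunElem S
  | .successAt i => .succ i
  | .failure => .fail

def RunElem.isRet : RunElem S → Bool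
  | .succ _ => true
  | .fail => true
  | _ => false

def RunElem.isCall : RunElem S → Bool
  | .call _ _ => true
  | .memo _ _ => true
  | _ => false

/-- `M(q,i) ↦ C(q,i)`. -/
def memoToCall : RunElem S → Option (RunElem S)
  | .memo q i => some (.call q i)
  | _ => none

/-- Big-step semantics (together with the produced run) of the backtracking
matching algorithm `Match` for plain NFAs:
`MatchRun A w q i r s` means the call `Match_{A,w}(q, i)` terminates with
result `r` and produces the run `s`. -/
inductive MatchRun (A : NFA Sigma S) (w : List Sigma) :
    S → ℕ → Result → List (RunElem S) → Prop where
  | accept {q : S} {i : ℕ} : q ∈ A.F →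
      MatchRun A w q i (.successAt i) [.call q i, .succ i]
  | eps {q q' : S} {i : ℕ} {r : Result} {s : List (RunElem S)} :
      q ∉ A.F → A.T q = Trans.eps q' →
      MatchRun A w q' i r s →
      MatchRun A w q i r (.call q i :: s ++ [r.elem])
  | branchSucc {q q' q'' : S} {i i' : ℕ} {s : List (RunElem S)} :
      q ∉ A.F → A.T q = Trans.branch q' q'' →
      MatchRun A w q' i (.successAt i') s →
      MatchRun A w q i (.successAt i') (.call q i :: s ++ [RunElem.succ i'])
  | branchFail {q q' q'' : S} {i : ℕ} {r : Result} {s s' : List (RunElem S)} :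
      q ∉ A.F → A.T q = Trans.branch q' q'' →
      MatchRun A w q' i .failure s →
      MatchRun A w q'' i r s' →
      MatchRun A w q i r (.call q i :: s ++ s' ++ [r.elem])
  | charSucc {q q' : S} {σ : Sigma} {i : ℕ} {r : Result} {s : List (RunElem S)} :
      q ∉ A.F → A.T q = Trans.char σ q' →
      w[i]? = some σ →
      MatchRun A w q' (i + 1) r s →
      MatchRun A w q i r (.call q i :: s ++ [r.elem])
  | charFail {q q' : S} {σ : Sigma} {i : ℕ} :
      q ∉ A.F → A.T q = Trans.char σ q' →
      w[i]? ≠ some σ →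
      MatchRun A w q i .failure [.call q i, .fail]

/-- Record `M(q,i) := Failure` in the memoization table if the result is a failure. -/
def recFail [DecidableEq S] (M : S × ℕ → Bool) (q : S) (i : ℕ) : Result → (S × ℕ → Bool)
  | .failure => fun p => if p = (q, i) then true else M p
  | _ => M

/-- Big-step semantics (with resulting memoization table and produced run) of the
memoized backtracking matching algorithm `Memo` for plain NFAs:
`MemoRun A w q i M M' r s` means the call `Memo^M_{A,w}(q, i)` terminates with result
`r`, final memoization table `M'` (where `M p = true` means `Failure` is recorded at the
key `p`), and produces the run `s`. -/
inductive MemoRun [DecidableEq S] (A : NFA Sigma S) (w : List Sigma) :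
    S → ℕ → (S × ℕ → Bool) → (S × ℕ → Bool) → Result → List (RunElem S) → Prop where
  | memoHit {q : S} {i : ℕ} {M : S × ℕ → Bool} : M (q, i) = true →
      MemoRun A w q i M M .failure [.memo q i, .fail]
  | accept {q : S} {i : ℕ} {M : S × ℕ → Bool} : M (q, i) = false → q ∈ A.F →
      MemoRun A w q i M M (.successAt i) [.call q i, .succ i]
  | eps {q q' : S} {i : ℕ} {M M' : S × ℕ → Bool} {r : Result} {s : List (RunElem S)} :
      M (q, i) = false → q ∉ A.F → A.T q = Trans.eps q' →
      MemoRun A w q' i M M' r s →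
      MemoRun A w q i M (recFail M' q i r) r (.call q i :: s ++ [r.elem])
  | branchSucc {q q' q'' : S} {i i' : ℕ} {M M' : S × ℕ → Bool} {s : List (RunElem S)} :
      M (q, i) = false → q ∉ A.F → A.T q = Trans.branch q' q'' →
      MemoRun A w q' i M M' (.successAt i') s →
      MemoRun A w q i M M' (.successAt i') (.call q i :: s ++ [RunElem.succ i'])
  | branchFail {q q' q'' : S} {i : ℕ} {M M' M'' : S × ℕ → Bool} {r : Result}
      {s s' : List (RunElem S)} :
      M (q, i) = false → q ∉ A.F → A.T q = Trans.branch q' q'' →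
      MemoRun A w q' i M M' .failure s →
      MemoRun A w q'' i M' M'' r s' →
      MemoRun A w q i M (recFail M'' q i r) r (.call q i :: s ++ s' ++ [r.elem])
  | charSucc {q q' : S} {σ : Sigma} {i : ℕ} {M M' : S × ℕ → Bool} {r : Result}
      {s : List (RunElem S)} :
      M (q, i) = false → q ∉ A.F → A.T q = Trans.char σ q' →
      w[i]? = some σ →
      MemoRun A w q' (i + 1) M M' r s →
      MemoRun A w q i M (recFail M' q i r) r (.call q i :: s ++ [r.elem])
  | charFail {q q' : S} {σ : Sigma} {i : ℕ} {M : S × ℕ → Bool} :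
      M (q, i) = false → q ∉ A.F → A.T q = Trans.char σ q' →
      w[i]? ≠ some σ →
      MemoRun A w q i M (recFail M q i .failure) .failure [.call q i, .fail]

/-! ## NFAs with sub-automata -/

/-- Kind labels of sub-automaton transitions: positive/negative look-ahead/look-behind
and atomic grouping. -/
inductive Kind : Type where
  | pla | nla | plb | nlb | at
deriving DecidableEq

mutual
/-- An NFA with sub-automata `⟨Q, q0, F, T⟩`: a list of top-level states, an initial
state, accepting states, and a transition function (relevant on non-accepting top-level
states) whose transitions may be labelled with further NFAs with sub-automata. -/
inductive SubNFA (Sigma S : Type) : Type where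
  | mk : List S → S → List S → (S → SubTrans Sigma S) → SubNFA Sigma S

/-- Transitions of an NFA with sub-automata. -/
inductive SubTrans (Sigma S : Type) : Type where
  | eps : S → SubTrans Sigma S
  | branch : S → S → SubTrans Sigma S
  | char : Sigma → S → SubTrans Sigma S
  | sub : Kind → SubNFA Sigma S → S → SubTrans Sigma S
end

/-- Top-level states `Q`. -/
def SubNFA.Q : SubNFA Sigma S → List S
  | .mk Q _ _ _ => Q

/-- Initial state `q0`. -/
def SubNFA.q0 : SubNFA Sigma S → S
  | .mk _ q0 _ _ => q0

/-- Accepting states `F`. -/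
def SubNFA.F : SubNFA Sigma S → List S
  | .mk _ _ F _ => F

/-- Transition function `T`. -/
def SubNFA.T : SubNFA Sigma S → S → SubTrans Sigma S
  | .mk _ _ _ T => T

mutual
/-- All automata occurring within an NFA with sub-automata (including itself), each
together with its nesting depth of atomic grouping (the number of enclosing
`at`-sub-automaton boundaries). -/
def SubNFA.compsD : SubNFA Sigma S → List (SubNFA Sigma S × ℕ)
  | .mk Q q0 F T => (.mk Q q0 F T, 0) :: Q.flatMap (fun q => SubTrans.subCompsD (T q))

def SubTrans.subCompsD : SubTrans Sigma S → List (SubNFA Sigma S × ℕ)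
  | .sub k A' _ => (SubNFA.compsD A').map (fun p => (p.1, p.2 + (if k = Kind.at then 1 else 0)))
  | _ => []
end

/-- All automata occurring within `A` (including `A` itself). -/
def SubNFA.comps (A : SubNFA Sigma S) : List (SubNFA Sigma S) :=
  A.compsD.map Prod.fst

/-- The set (list) of all states `P` occurring within `A`. -/
def SubNFA.allStates (A : SubNFA Sigma S) : List S :=
  A.comps.flatMap SubNFA.Q

/-- The nesting depth of atomic grouping `ν_A(q)` of a state `q` of `A`. -/
def SubNFA.nu [DecidableEq S] (A : SubNFA Sigma S) (q : S) : ℕ :=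
  (A.compsD.map (fun p => if q ∈ p.1.Q then p.2 else 0)).sum

/-- The maximal nesting depth of atomic grouping `ν(A)`. -/
def SubNFA.nuMax [DecidableEq S] (A : SubNFA Sigma S) : ℕ :=
  (A.allStates.map A.nu).foldr max 0

/-- Local wellformedness of one automaton: the initial state is a top-level state,
accepting states are top-level states, and transitions of non-accepting top-level
states lead to top-level states. -/
def SubNFA.LocalOK (B : SubNFA Sigma S) : Prop :=
  B.q0 ∈ B.Q ∧ (∀ f ∈ B.F, f ∈ B.Q) ∧ ∀ q ∈ B.Q, q ∉ B.F →
    match B.T q with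
    | .eps q' => q' ∈ B.Q
    | .branch q' q'' => q' ∈ B.Q ∧ q'' ∈ B.Q
    | .char _ q' => q' ∈ B.Q
    | .sub _ _ q' => q' ∈ B.Q

/-- Wellformedness of an NFA with sub-automata: every component automaton is locally
wellformed, and all the state lists are disjoint and duplicate-free (so that `P` is
the disjoint union of the top-level state sets of all components). -/
def SubNFA.WF (A : SubNFA Sigma S) : Prop :=
  (∀ B ∈ A.comps, B.LocalOK) ∧ A.allStates.Nodup

/-- The kind labels of all sub-automaton transitions occurring in `A`. -/
def SubNFA.kinds [DecidableEq S] (A : SubNFA Sigma S) : List Kind :=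
  A.comps.flatMap fun B =>
    (B.Q.filter (fun q => decide (q ∉ B.F))).filterMap fun q =>
      match B.T q with
      | .sub k _ _ => some k
      | _ => none

/-- A la-NFA: all kind labels are look-around labels (for simplicity, only positive
look-ahead `pla` is treated). -/
def SubNFA.IsLaNFA [DecidableEq S] (A : SubNFA Sigma S) : Prop :=
  ∀ k ∈ A.kinds, k = Kind.pla

/-- An at-NFA: all kind labels are `at` (atomic grouping). -/
def SubNFA.IsAtNFA [DecidableEq S] (A : SubNFA Sigma S) : Prop :=
  ∀ k ∈ A.kinds, k = Kind.at

/-- A (la,at)-NFA in which (for simplicity) only the kinds `pla` and `at` occur. -/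
def SubNFA.IsLaAtNFA [DecidableEq S] (A : SubNFA Sigma S) : Prop :=
  ∀ k ∈ A.kinds, k = Kind.pla ∨ k = Kind.at

/-- One global ε-step of an NFA with sub-automata: an `Eps` or `Branch` transition, or a
`Sub` transition with a look-around kind (from the transition's source to its successor),
of a non-accepting top-level state of any component automaton. -/
def SubNFA.epsStep (A : SubNFA Sigma S) (q q' : S) : Prop :=
  ∃ B ∈ A.comps, q ∈ B.Q ∧ q ∉ B.F ∧
    (B.T q = SubTrans.eps q' ∨
     (∃ q'', B.T q = SubTrans.branch q' q'') ∨
     (∃ q'', B.T q = SubTrans.branch q'' q') ∨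
     (∃ k A'', B.T q = SubTrans.sub k A'' q' ∧ k ≠ Kind.at))

/-- The NFA with sub-automata has no ε-loops. -/
def SubNFA.NoEpsLoops (A : SubNFA Sigma S) : Prop :=
  ∀ q : S, ¬ Relation.TransGen A.epsStep q q

/-- All pairs (state, transition) of non-accepting top-level states of all component
automata of `A`. -/
def SubNFA.allTransNF [DecidableEq S] (A : SubNFA Sigma S) : List (S × SubTrans Sigma S) :=
  A.comps.flatMap fun B => (B.Q.filter (fun q => decide (q ∉ B.F))).map fun q => (q, B.T q)

/-- How many of the buckets in the definition of the in-degree of `q` a given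
transition contributes to. -/
def SubTrans.hits [DecidableEq S] (t : SubTrans Sigma S) (q : S) : ℕ :=
  match t with
  | .eps q' => if q' = q then 1 else 0
  | .char _ q' => if q' = q then 1 else 0
  | .branch q' q'' => (if q' = q then 1 else 0) + (if q'' = q then 1 else 0)
  | .sub _ _ q' => if q' = q then 1 else 0

/-- The in-degree `#in(q)` of a state of an NFA with sub-automata. -/
def SubNFA.inDeg [DecidableEq S] (A : SubNFA Sigma S) (q : S) : ℕ :=
  (A.allTransNF.map (fun p => p.2.hits q)).sum +
  (if q ∈ A.comps.map SubNFA.q0 then 1 else 0)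

/-- The maximal in-degree `#in(A)`. -/
def SubNFA.inDegMax [DecidableEq S] (A : SubNFA Sigma S) : ℕ :=
  (A.allStates.map A.inDeg).foldr max 0

/-! ## run elements for `Memo-la` and `Match-(la,at)` -/

/-- Elements of runs of `Memo-la` (and of `Match-(la,at)`): calls `C(q,i)`,
memoization-table invocations `M(q,i)`, and the results `S(i')`, `S'` (bare success),
and `F`. -/
inductive LaRunElem (S : Type) : Type where
  | call : S → ℕ → LaRunElem S
  | memo : S → ℕ → LaRunElem S
  | succAt : ℕ → LaRunElem S
  | succ : LaRunElem S
  | fail : LaRunElem S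
deriving DecidableEq

def LaRunElem.isRet : LaRunElem S → Bool
  | .succAt _ => true
  | .succ => true
  | .fail => true
  | _ => false

def LaRunElem.isCall : LaRunElem S → Bool
  | .call _ _ => true
  | .memo _ _ => true
  | _ => false

def laMemoToCall : LaRunElem S → Option (LaRunElem S)
  | .memo q i => some (.call q i)
  | _ => none

def Result.laElem {S : Type} : Result → LaRunElem S
  | .successAt i => .succAt i
  | .failure => .fail

/-! ## The backtracking matching algorithm `Match-(la,at)` -/

/-- Big-step semantics (with produced run) of the backtracking matching algorithm
`Match-(la,at)` for NFAs with sub-automata: `LAMatchRun w A q i r s` means the call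
`Match-(la,at)_{A,w}(q, i)` terminates with result `r` and produces the run `s`.
For simplicity, only the look-around kind `pla` (besides `at`) is treated. -/
inductive LAMatchRun (w : List Sigma) :
    SubNFA Sigma S → S → ℕ → Result → List (LaRunElem S) → Prop where
  | accept {A : SubNFA Sigma S} {q : S} {i : ℕ} : q ∈ A.F →
      LAMatchRun w A q i (.successAt i) [.call q i, .succAt i]
  | eps {A : SubNFA Sigma S} {q q' : S} {i : ℕ} {r : Result} {s : List (LaRunElem S)} :
      q ∉ A.F → A.T q = SubTrans.eps q' →
      LAMatchRun w A q' i r s →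
      LAMatchRun w A q i r (.call q i :: s ++ [r.laElem])
  | branchSucc {A : SubNFA Sigma S} {q q' q'' : S} {i i' : ℕ} {s : List (LaRunElem S)} :
      q ∉ A.F → A.T q = SubTrans.branch q' q'' →
      LAMatchRun w A q' i (.successAt i') s →
      LAMatchRun w A q i (.successAt i') (.call q i :: s ++ [LaRunElem.succAt i'])
  | branchFail {A : SubNFA Sigma S} {q q' q'' : S} {i : ℕ} {r : Result}
      {s s' : List (LaRunElem S)} :
      q ∉ A.F → A.T q = SubTrans.branch q' q'' →
      LAMatchRun w A q' i .failure s →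
      LAMatchRun w A q'' i r s' →
      LAMatchRun w A q i r (.call q i :: s ++ s' ++ [r.laElem])
  | charSucc {A : SubNFA Sigma S} {q q' : S} {σ : Sigma} {i : ℕ} {r : Result}
      {s : List (LaRunElem S)} :
      q ∉ A.F → A.T q = SubTrans.char σ q' →
      w[i]? = some σ →
      LAMatchRun w A q' (i + 1) r s →
      LAMatchRun w A q i r (.call q i :: s ++ [r.laElem])
  | charFail {A : SubNFA Sigma S} {q q' : S} {σ : Sigma} {i : ℕ} :
      q ∉ A.F → A.T q = SubTrans.char σ q' →
      w[i]? ≠ some σ →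
      LAMatchRun w A q i .failure [.call q i, .fail]
  | plaSucc {A A' : SubNFA Sigma S} {q q' : S} {i i' : ℕ} {r : Result}
      {s1 s2 : List (LaRunElem S)} :
      q ∉ A.F → A.T q = SubTrans.sub Kind.pla A' q' →
      LAMatchRun w A' A'.q0 i (.successAt i') s1 →
      LAMatchRun w A q' i r s2 →
      LAMatchRun w A q i r (.call q i :: s1 ++ s2 ++ [r.laElem])
  | plaFail {A A' : SubNFA Sigma S} {q q' : S} {i : ℕ} {s1 : List (LaRunElem S)} :
      q ∉ A.F → A.T q = SubTrans.sub Kind.pla A' q' →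
      LAMatchRun w A' A'.q0 i .failure s1 →
      LAMatchRun w A q i .failure (.call q i :: s1 ++ [LaRunElem.fail])
  | atSucc {A A' : SubNFA Sigma S} {q q' : S} {i i' : ℕ} {r : Result}
      {s1 s2 : List (LaRunElem S)} :
      q ∉ A.F → A.T q = SubTrans.sub Kind.at A' q' →
      LAMatchRun w A' A'.q0 i (.successAt i') s1 →
      LAMatchRun w A q' i' r s2 →
      LAMatchRun w A q i r (.call q i :: s1 ++ s2 ++ [r.laElem])
  | atFail {A A' : SubNFA Sigma S} {q q' : S} {i : ℕ} {s1 : List (LaRunElem S)} :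
      q ∉ A.F → A.T q = SubTrans.sub Kind.at A' q' →
      LAMatchRun w A' A'.q0 i .failure s1 →
      LAMatchRun w A q i .failure (.call q i :: s1 ++ [LaRunElem.fail])

/-! ## `Memo-la` -/

/-- Values of the memoization table of `Memo-la`: `Failure` or `Success`. -/
inductive LaVal : Type where
  | success : LaVal
  | failure : LaVal
deriving DecidableEq

/-- Results of `Memo-la`: `SuccessAt i'`, bare `Success`, or `Failure`. -/
inductive LaResult : Type where
  | successAt : ℕ → LaResult
  | success : LaResult
  | failure : LaResult
deriving DecidableEq

def LaVal.toResult : LaVal → LaResult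
  | .success => .success
  | .failure => .failure

def LaResult.elem {S : Type} : LaResult → LaRunElem S
  | .successAt i => .succAt i
  | .success => .succ
  | .failure => .fail

def Result.toLa : Result → LaResult
  | .successAt i => .successAt i
  | .failure => .failure

/-- The final recording of `Memo-la`: `M(q,i) := Success` if the result is
`SuccessAt i'` or `Success`, and `M(q,i) := Failure` if the result is `Failure`. -/
def laRecord [DecidableEq S] (M : S × ℕ → Option LaVal) (q : S) (i : ℕ) (r : LaResult) :
    S × ℕ → Option LaVal :=
  fun p => if p = (q, i) then
    some (match r with | .failure => LaVal.failure | _ => LaVal.success)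
  else M p

/-- Big-step semantics (with resulting memoization table and produced run) of the
memoized backtracking matching algorithm `Memo-la` for la-NFAs:
`MemoLaRun w A q i M M' r s` means the call `Memo-la^M_{A,w}(q, i)` terminates with
result `r`, final memoization table `M'`, and produces the run `s`. The memoization
table is shared between the top-level automaton and all sub-automata. -/
inductive MemoLaRun [DecidableEq S] (w : List Sigma) :
    SubNFA Sigma S → S → ℕ → (S × ℕ → Option LaVal) → (S × ℕ → Option LaVal) →
    LaResult → List (LaRunElem S) → Prop where
  | memoHit {A : SubNFA Sigma S} {q : S} {i : ℕ} {M : S × ℕ → Option LaVal} {v : LaVal} :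
      M (q, i) = some v →
      MemoLaRun w A q i M M v.toResult [.memo q i, v.toResult.elem]
  | accept {A : SubNFA Sigma S} {q : S} {i : ℕ} {M : S × ℕ → Option LaVal} :
      M (q, i) = none → q ∈ A.F →
      MemoLaRun w A q i M (laRecord M q i (.successAt i)) (.successAt i)
        [.call q i, .succAt i]
  | eps {A : SubNFA Sigma S} {q q' : S} {i : ℕ} {M M' : S × ℕ → Option LaVal}
      {r : LaResult} {s : List (LaRunElem S)} :
      M (q, i) = none → q ∉ A.F → A.T q = SubTrans.eps q' →
      MemoLaRun w A q' i M M' r s →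
      MemoLaRun w A q i M (laRecord M' q i r) r (.call q i :: s ++ [r.elem])
  | branchNoFail {A : SubNFA Sigma S} {q q' q'' : S} {i : ℕ}
      {M M' : S × ℕ → Option LaVal} {r : LaResult} {s : List (LaRunElem S)} :
      M (q, i) = none → q ∉ A.F → A.T q = SubTrans.branch q' q'' →
      MemoLaRun w A q' i M M' r s → r ≠ .failure →
      MemoLaRun w A q i M (laRecord M' q i r) r (.call q i :: s ++ [r.elem])
  | branchFail {A : SubNFA Sigma S} {q q' q'' : S} {i : ℕ}
      {M M1 M2 : S × ℕ → Option LaVal} {r : LaResult} {s1 s2 : List (LaRunElem S)} :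
      M (q, i) = none → q ∉ A.F → A.T q = SubTrans.branch q' q'' →
      MemoLaRun w A q' i M M1 .failure s1 →
      MemoLaRun w A q'' i M1 M2 r s2 →
      MemoLaRun w A q i M (laRecord M2 q i r) r (.call q i :: s1 ++ s2 ++ [r.elem])
  | charSucc {A : SubNFA Sigma S} {q q' : S} {σ : Sigma} {i : ℕ}
      {M M' : S × ℕ → Option LaVal} {r : LaResult} {s : List (LaRunElem S)} :
      M (q, i) = none → q ∉ A.F → A.T q = SubTrans.char σ q' →
      w[i]? = some σ →
      MemoLaRun w A q' (i + 1) M M' r s →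
      MemoLaRun w A q i M (laRecord M' q i r) r (.call q i :: s ++ [r.elem])
  | charFail {A : SubNFA Sigma S} {q q' : S} {σ : Sigma} {i : ℕ}
      {M : S × ℕ → Option LaVal} :
      M (q, i) = none → q ∉ A.F → A.T q = SubTrans.char σ q' →
      w[i]? ≠ some σ →
      MemoLaRun w A q i M (laRecord M q i .failure) .failure [.call q i, .fail]
  | plaSucc {A A' : SubNFA Sigma S} {q q' : S} {i : ℕ}
      {M M1 M2 : S × ℕ → Option LaVal} {r1 r : LaResult} {s1 s2 : List (LaRunElem S)} :
      M (q, i) = none → q ∉ A.F → A.T q = SubTrans.sub Kind.pla A' q' →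
      MemoLaRun w A' A'.q0 i M M1 r1 s1 → r1 ≠ .failure →
      MemoLaRun w A q' i M1 M2 r s2 →
      MemoLaRun w A q i M (laRecord M2 q i r) r (.call q i :: s1 ++ s2 ++ [r.elem])
  | plaFail {A A' : SubNFA Sigma S} {q q' : S} {i : ℕ}
      {M M1 : S × ℕ → Option LaVal} {s1 : List (LaRunElem S)} :
      M (q, i) = none → q ∉ A.F → A.T q = SubTrans.sub Kind.pla A' q' →
      MemoLaRun w A' A'.q0 i M M1 .failure s1 →
      MemoLaRun w A q i M (laRecord M1 q i .failure) .failure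
        (.call q i :: s1 ++ [LaRunElem.fail])

/-! ## `Memo-at` -/

/-- Results of `Memo-at`: `SuccessAt(i', K)` with a set `K` of delayed memoization keys,
or `Failure(j)` with a nesting depth `j`. -/
inductive AtResult (S : Type) : Type where
  | successAt : ℕ → Finset (S × ℕ) → AtResult S
  | failure : ℕ → AtResult S

/-- Elements of runs of `Memo-at`: calls `C(q,i)`, memoization-table invocations
`M(q,i)`, and results `S(i')` and `F(j)`. -/
inductive AtRunElem (S : Type) : Type where
  | call : S → ℕ → AtRunElem S
  | memo : S → ℕ → AtRunElem S
  | succ : ℕ → AtRunElem S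
  | fail : ℕ → AtRunElem S
deriving DecidableEq

def AtRunElem.isRet : AtRunElem S → Bool
  | .succ _ => true
  | .fail _ => true
  | _ => false

def AtRunElem.isCall : AtRunElem S → Bool
  | .call _ _ => true
  | .memo _ _ => true
  | _ => false

def atMemoToCall : AtRunElem S → Option (AtRunElem S)
  | .memo q i => some (.call q i)
  | _ => none

def AtResult.elem {S : Type} : AtResult S → AtRunElem S
  | .successAt i _ => .succ i
  | .failure j => .fail j

/-- `f`, converting results of `Memo-at` to results of `Match-(la,at)`. -/
def AtResult.toResult {S : Type} : AtResult S → Result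
  | .successAt i _ => .successAt i
  | .failure _ => .failure

/-- The final step of `Memo-at`: on success, the key `(q,i)` is added to the set of
delayed keys. -/
def atFinal [DecidableEq S] (q : S) (i : ℕ) : AtResult S → AtResult S
  | .successAt i' K => .successAt i' (insert (q, i) K)
  | .failure j => .failure j

/-- The final recording of `Memo-at`: `M(q,i) := Failure(j)` if the result is
`Failure(j)`. -/
def atRecord [DecidableEq S] (M : S × ℕ → Option ℕ) (q : S) (i : ℕ) :
    AtResult S → (S × ℕ → Option ℕ)
  | .failure j => fun p => if p = (q, i) then some j else M p
  | _ => M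

/-- Batch recording `M(k) := Failure(j)` for every `k ∈ K`. -/
def atBatch [DecidableEq S] (M : S × ℕ → Option ℕ) (K : Finset (S × ℕ)) (j : ℕ) :
    S × ℕ → Option ℕ :=
  fun p => if p ∈ K then some j else M p

/-- Big-step semantics (with resulting memoization table and produced run) of the
memoized backtracking matching algorithm `Memo-at` for at-NFAs:
`MemoAtRun A0 w A q i M M' r s` means the call `Memo-at^M_{A0,A,w}(q, i)` (with the
whole automaton `A0` and current sub-automaton `A`) terminates with result `r`, final
memoization table `M'`, and produces the run `s`. -/
inductive MemoAtRun [DecidableEq S] (A0 : SubNFA Sigma S) (w : List Sigma) :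
    SubNFA Sigma S → S → ℕ → (S × ℕ → Option ℕ) → (S × ℕ → Option ℕ) →
    AtResult S → List (AtRunElem S) → Prop where
  | memoHit {A : SubNFA Sigma S} {q : S} {i j : ℕ} {M : S × ℕ → Option ℕ} :
      M (q, i) = some j →
      MemoAtRun A0 w A q i M M (.failure j) [.memo q i, .fail j]
  | accept {A : SubNFA Sigma S} {q : S} {i : ℕ} {M : S × ℕ → Option ℕ} :
      M (q, i) = none → q ∈ A.F →
      MemoAtRun A0 w A q i M M (.successAt i {(q, i)}) [.call q i, .succ i]
  | eps {A : SubNFA Sigma S} {q q' : S} {i : ℕ} {M M' : S × ℕ → Option ℕ}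
      {r : AtResult S} {s : List (AtRunElem S)} :
      M (q, i) = none → q ∉ A.F → A.T q = SubTrans.eps q' →
      MemoAtRun A0 w A q' i M M' r s →
      MemoAtRun A0 w A q i M (atRecord M' q i r) (atFinal q i r)
        (.call q i :: s ++ [r.elem])
  | branchNoBT {A : SubNFA Sigma S} {q q' q'' : S} {i : ℕ} {M M' : S × ℕ → Option ℕ}
      {r : AtResult S} {s : List (AtRunElem S)} :
      M (q, i) = none → q ∉ A.F → A.T q = SubTrans.branch q' q'' →
      MemoAtRun A0 w A q' i M M' r s →
      (∀ j, r = AtResult.failure j → j ≠ A0.nu q) →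
      MemoAtRun A0 w A q i M (atRecord M' q i r) (atFinal q i r)
        (.call q i :: s ++ [r.elem])
  | branchBTSucc {A : SubNFA Sigma S} {q q' q'' : S} {i i'' : ℕ} {K : Finset (S × ℕ)}
      {M M1 M2 : S × ℕ → Option ℕ} {s1 s2 : List (AtRunElem S)} :
      M (q, i) = none → q ∉ A.F → A.T q = SubTrans.branch q' q'' →
      MemoAtRun A0 w A q' i M M1 (.failure (A0.nu q)) s1 →
      MemoAtRun A0 w A q'' i M1 M2 (.successAt i'' K) s2 →
      MemoAtRun A0 w A q i M M2 (atFinal q i (.successAt i'' K))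
        (.call q i :: s1 ++ s2 ++ [AtRunElem.succ i''])
  | branchBTFail {A : SubNFA Sigma S} {q q' q'' : S} {i j' : ℕ}
      {M M1 M2 : S × ℕ → Option ℕ} {s1 s2 : List (AtRunElem S)} :
      M (q, i) = none → q ∉ A.F → A.T q = SubTrans.branch q' q'' →
      MemoAtRun A0 w A q' i M M1 (.failure (A0.nu q)) s1 →
      MemoAtRun A0 w A q'' i M1 M2 (.failure j') s2 →
      MemoAtRun A0 w A q i M (atRecord M2 q i (.failure (min (A0.nu q) j')))
        (.failure (min (A0.nu q) j'))
        (.call q i :: s1 ++ s2 ++ [AtRunElem.fail (min (A0.nu q) j')])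
  | charSucc {A : SubNFA Sigma S} {q q' : S} {σ : Sigma} {i : ℕ}
      {M M' : S × ℕ → Option ℕ} {r : AtResult S} {s : List (AtRunElem S)} :
      M (q, i) = none → q ∉ A.F → A.T q = SubTrans.char σ q' →
      w[i]? = some σ →
      MemoAtRun A0 w A q' (i + 1) M M' r s →
      MemoAtRun A0 w A q i M (atRecord M' q i r) (atFinal q i r)
        (.call q i :: s ++ [r.elem])
  | charFail {A : SubNFA Sigma S} {q q' : S} {σ : Sigma} {i : ℕ}
      {M : S × ℕ → Option ℕ} :
      M (q, i) = none → q ∉ A.F → A.T q = SubTrans.char σ q' →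
      w[i]? ≠ some σ →
      MemoAtRun A0 w A q i M (atRecord M q i (.failure (A0.nu q)))
        (.failure (A0.nu q)) [.call q i, .fail (A0.nu q)]
  | subSuccSucc {A A' : SubNFA Sigma S} {q q' : S} {i i' i'' : ℕ}
      {K' K'' : Finset (S × ℕ)} {M M1 M2 : S × ℕ → Option ℕ}
      {s1 s2 : List (AtRunElem S)} :
      M (q, i) = none → q ∉ A.F → A.T q = SubTrans.sub Kind.at A' q' →
      MemoAtRun A0 w A' A'.q0 i M M1 (.successAt i' K') s1 →
      MemoAtRun A0 w A q' i' M1 M2 (.successAt i'' K'') s2 →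
      MemoAtRun A0 w A q i M M2 (atFinal q i (.successAt i'' (K' ∪ K'')))
        (.call q i :: s1 ++ s2 ++ [AtRunElem.succ i''])
  | subSuccFail {A A' : SubNFA Sigma S} {q q' : S} {i i' j : ℕ} {K' : Finset (S × ℕ)}
      {M M1 M2 : S × ℕ → Option ℕ} {s1 s2 : List (AtRunElem S)} :
      M (q, i) = none → q ∉ A.F → A.T q = SubTrans.sub Kind.at A' q' →
      MemoAtRun A0 w A' A'.q0 i M M1 (.successAt i' K') s1 →
      MemoAtRun A0 w A q' i' M1 M2 (.failure j) s2 →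
      MemoAtRun A0 w A q i M (atRecord (atBatch M2 K' j) q i (.failure j)) (.failure j)
        (.call q i :: s1 ++ s2 ++ [AtRunElem.fail j])
  | subFailHigh {A A' : SubNFA Sigma S} {q q' : S} {i j : ℕ}
      {M M1 : S × ℕ → Option ℕ} {s1 : List (AtRunElem S)} :
      M (q, i) = none → q ∉ A.F → A.T q = SubTrans.sub Kind.at A' q' →
      MemoAtRun A0 w A' A'.q0 i M M1 (.failure j) s1 →
      A0.nu q < j →
      MemoAtRun A0 w A q i M (atRecord M1 q i (.failure (A0.nu q)))
        (.failure (A0.nu q)) (.call q i :: s1 ++ [AtRunElem.fail (A0.nu q)])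
  | subFailLow {A A' : SubNFA Sigma S} {q q' : S} {i j : ℕ}
      {M M1 : S × ℕ → Option ℕ} {s1 : List (AtRunElem S)} :
      M (q, i) = none → q ∉ A.F → A.T q = SubTrans.sub Kind.at A' q' →
      MemoAtRun A0 w A' A'.q0 i M M1 (.failure j) s1 →
      j ≤ A0.nu q →
      MemoAtRun A0 w A q i M (atRecord M1 q i (.failure j)) (.failure j)
        (.call q i :: s1 ++ [AtRunElem.fail j])

/-! ## The combined algorithm `Memo-(la,at)` -/

/-- Values of the memoization table of `Memo-(la,at)`: `Success` or `Failure(j)`. -/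
inductive LaAtVal : Type where
  | success : LaAtVal
  | failure : ℕ → LaAtVal

/-- Results of `Memo-(la,at)`: `SuccessAt(i', K)`, bare `Success`, or `Failure(j)`. -/
inductive LaAtResult (S : Type) : Type where
  | successAt : ℕ → Finset (S × ℕ) → LaAtResult S
  | success : LaAtResult S
  | failure : ℕ → LaAtResult S

def LaAtVal.toResult {S : Type} : LaAtVal → LaAtResult S
  | .success => .success
  | .failure j => .failure j

/-- `f`, converting results of `Memo-(la,at)` to results of `Match-(la,at)`
(undefined on the bare value `Success`). -/
def LaAtResult.toResult? {S : Type} : LaAtResult S → Option Result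
  | .successAt i _ => some (.successAt i)
  | .success => none
  | .failure _ => some .failure

def laAtFinal [DecidableEq S] (q : S) (i : ℕ) : LaAtResult S → LaAtResult S
  | .successAt i' K => .successAt i' (insert (q, i) K)
  | r => r

def laAtRecord [DecidableEq S] (M : S × ℕ → Option LaAtVal) (q : S) (i : ℕ) :
    LaAtResult S → (S × ℕ → Option LaAtVal)
  | .successAt _ _ => M
  | .success => fun p => if p = (q, i) then some LaAtVal.success else M p
  | .failure j => fun p => if p = (q, i) then some (LaAtVal.failure j) else M p

def laAtBatch [DecidableEq S] (M : S × ℕ → Option LaAtVal) (K : Finset (S × ℕ))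
    (v : LaAtVal) : S × ℕ → Option LaAtVal :=
  fun p => if p ∈ K then some v else M p

/-- Big-step semantics (with resulting memoization table and the number of recursive
calls made) of the combined memoized backtracking matching algorithm `Memo-(la,at)`:
`MemoLaAtRun w A0 A q i M M' r n` means the call `Memo-(la,at)^M_{A0,A,w}(q, i)`
terminates with result `r`, final memoization table `M'`, making `n` calls in total.
On a positive look-ahead transition, the sub-automaton becomes the new whole automaton
(so nesting depths of atomic grouping are reset by look-around operators). -/
inductive MemoLaAtRun [DecidableEq S] (w : List Sigma) :
    SubNFA Sigma S → SubNFA Sigma S → S → ℕ →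
    (S × ℕ → Option LaAtVal) → (S × ℕ → Option LaAtVal) → LaAtResult S → ℕ → Prop where
  | memoHit {A0 A : SubNFA Sigma S} {q : S} {i : ℕ} {M : S × ℕ → Option LaAtVal}
      {v : LaAtVal} :
      M (q, i) = some v →
      MemoLaAtRun w A0 A q i M M v.toResult 1
  | accept {A0 A : SubNFA Sigma S} {q : S} {i : ℕ} {M : S × ℕ → Option LaAtVal} :
      M (q, i) = none → q ∈ A.F →
      MemoLaAtRun w A0 A q i M M (.successAt i {(q, i)}) 1
  | eps {A0 A : SubNFA Sigma S} {q q' : S} {i : ℕ} {M M' : S × ℕ → Option LaAtVal}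
      {r : LaAtResult S} {n : ℕ} :
      M (q, i) = none → q ∉ A.F → A.T q = SubTrans.eps q' →
      MemoLaAtRun w A0 A q' i M M' r n →
      MemoLaAtRun w A0 A q i M (laAtRecord M' q i (laAtFinal q i r)) (laAtFinal q i r)
        (n + 1)
  | branchNoBT {A0 A : SubNFA Sigma S} {q q' q'' : S} {i : ℕ}
      {M M' : S × ℕ → Option LaAtVal} {r : LaAtResult S} {n : ℕ} :
      M (q, i) = none → q ∉ A.F → A.T q = SubTrans.branch q' q'' →
      MemoLaAtRun w A0 A q' i M M' r n →
      (∀ j, r = LaAtResult.failure j → j ≠ A0.nu q) →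
      MemoLaAtRun w A0 A q i M (laAtRecord M' q i (laAtFinal q i r)) (laAtFinal q i r)
        (n + 1)
  | branchBTFail {A0 A : SubNFA Sigma S} {q q' q'' : S} {i j' : ℕ}
      {M M1 M2 : S × ℕ → Option LaAtVal} {n1 n2 : ℕ} :
      M (q, i) = none → q ∉ A.F → A.T q = SubTrans.branch q' q'' →
      MemoLaAtRun w A0 A q' i M M1 (.failure (A0.nu q)) n1 →
      MemoLaAtRun w A0 A q'' i M1 M2 (.failure j') n2 →
      MemoLaAtRun w A0 A q i M
        (laAtRecord M2 q i (.failure (min (A0.nu q) j')))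
        (.failure (min (A0.nu q) j')) (n1 + n2 + 1)
  | branchBTOther {A0 A : SubNFA Sigma S} {q q' q'' : S} {i : ℕ}
      {M M1 M2 : S × ℕ → Option LaAtVal} {r : LaAtResult S} {n1 n2 : ℕ} :
      M (q, i) = none → q ∉ A.F → A.T q = SubTrans.branch q' q'' →
      MemoLaAtRun w A0 A q' i M M1 (.failure (A0.nu q)) n1 →
      MemoLaAtRun w A0 A q'' i M1 M2 r n2 →
      (∀ j, r ≠ LaAtResult.failure j) →
      MemoLaAtRun w A0 A q i M (laAtRecord M2 q i (laAtFinal q i r)) (laAtFinal q i r)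
        (n1 + n2 + 1)
  | charSucc {A0 A : SubNFA Sigma S} {q q' : S} {σ : Sigma} {i : ℕ}
      {M M' : S × ℕ → Option LaAtVal} {r : LaAtResult S} {n : ℕ} :
      M (q, i) = none → q ∉ A.F → A.T q = SubTrans.char σ q' →
      w[i]? = some σ →
      MemoLaAtRun w A0 A q' (i + 1) M M' r n →
      MemoLaAtRun w A0 A q i M (laAtRecord M' q i (laAtFinal q i r)) (laAtFinal q i r)
        (n + 1)
  | charFail {A0 A : SubNFA Sigma S} {q q' : S} {σ : Sigma} {i : ℕ}
      {M : S × ℕ → Option LaAtVal} :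
      M (q, i) = none → q ∉ A.F → A.T q = SubTrans.char σ q' →
      w[i]? ≠ some σ →
      MemoLaAtRun w A0 A q i M (laAtRecord M q i (.failure (A0.nu q)))
        (.failure (A0.nu q)) 1
  | plaSuccAt {A0 A A' : SubNFA Sigma S} {q q' : S} {i i' : ℕ} {K' : Finset (S × ℕ)}
      {M M1 M2 : S × ℕ → Option LaAtVal} {r : LaAtResult S} {n1 n2 : ℕ} :
      M (q, i) = none → q ∉ A.F → A.T q = SubTrans.sub Kind.pla A' q' →
      MemoLaAtRun w A' A' A'.q0 i M M1 (.successAt i' K') n1 →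
      MemoLaAtRun w A0 A q' i (laAtBatch M1 K' LaAtVal.success) M2 r n2 →
      MemoLaAtRun w A0 A q i M (laAtRecord M2 q i (laAtFinal q i r)) (laAtFinal q i r)
        (n1 + n2 + 1)
  | plaBare {A0 A A' : SubNFA Sigma S} {q q' : S} {i : ℕ}
      {M M1 M2 : S × ℕ → Option LaAtVal} {r : LaAtResult S} {n1 n2 : ℕ} :
      M (q, i) = none → q ∉ A.F → A.T q = SubTrans.sub Kind.pla A' q' →
      MemoLaAtRun w A' A' A'.q0 i M M1 .success n1 →
      MemoLaAtRun w A0 A q' i M1 M2 r n2 →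
      MemoLaAtRun w A0 A q i M (laAtRecord M2 q i (laAtFinal q i r)) (laAtFinal q i r)
        (n1 + n2 + 1)
  | plaFail {A0 A A' : SubNFA Sigma S} {q q' : S} {i j : ℕ}
      {M M1 : S × ℕ → Option LaAtVal} {n1 : ℕ} :
      M (q, i) = none → q ∉ A.F → A.T q = SubTrans.sub Kind.pla A' q' →
      MemoLaAtRun w A' A' A'.q0 i M M1 (.failure j) n1 →
      MemoLaAtRun w A0 A q i M (laAtRecord M1 q i (.failure (A0.nu q)))
        (.failure (A0.nu q)) (n1 + 1)
  | atSuccSucc {A0 A A' : SubNFA Sigma S} {q q' : S} {i i' i'' : ℕ}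
      {K' K'' : Finset (S × ℕ)} {M M1 M2 : S × ℕ → Option LaAtVal} {n1 n2 : ℕ} :
      M (q, i) = none → q ∉ A.F → A.T q = SubTrans.sub Kind.at A' q' →
      MemoLaAtRun w A0 A' A'.q0 i M M1 (.successAt i' K') n1 →
      MemoLaAtRun w A0 A q' i' M1 M2 (.successAt i'' K'') n2 →
      MemoLaAtRun w A0 A q i M M2
        (laAtFinal q i (.successAt i'' (K' ∪ K''))) (n1 + n2 + 1)
  | atSuccBare {A0 A A' : SubNFA Sigma S} {q q' : S} {i i' : ℕ} {K' : Finset (S × ℕ)}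
      {M M1 M2 : S × ℕ → Option LaAtVal} {n1 n2 : ℕ} :
      M (q, i) = none → q ∉ A.F → A.T q = SubTrans.sub Kind.at A' q' →
      MemoLaAtRun w A0 A' A'.q0 i M M1 (.successAt i' K') n1 →
      MemoLaAtRun w A0 A q' i' M1 M2 .success n2 →
      MemoLaAtRun w A0 A q i M
        (laAtRecord (laAtBatch M2 K' LaAtVal.success) q i .success) .success
        (n1 + n2 + 1)
  | atSuccFail {A0 A A' : SubNFA Sigma S} {q q' : S} {i i' j : ℕ} {K' : Finset (S × ℕ)}
      {M M1 M2 : S × ℕ → Option LaAtVal} {n1 n2 : ℕ} :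
      M (q, i) = none → q ∉ A.F → A.T q = SubTrans.sub Kind.at A' q' →
      MemoLaAtRun w A0 A' A'.q0 i M M1 (.successAt i' K') n1 →
      MemoLaAtRun w A0 A q' i' M1 M2 (.failure j) n2 →
      MemoLaAtRun w A0 A q i M
        (laAtRecord (laAtBatch M2 K' (LaAtVal.failure j)) q i (.failure j))
        (.failure j) (n1 + n2 + 1)
  | atBare {A0 A A' : SubNFA Sigma S} {q q' : S} {i : ℕ}
      {M M1 : S × ℕ → Option LaAtVal} {n1 : ℕ} :
      M (q, i) = none → q ∉ A.F → A.T q = SubTrans.sub Kind.at A' q' →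
      MemoLaAtRun w A0 A' A'.q0 i M M1 .success n1 →
      MemoLaAtRun w A0 A q i M (laAtRecord M1 q i .success) .success (n1 + 1)
  | atFailHigh {A0 A A' : SubNFA Sigma S} {q q' : S} {i j : ℕ}
      {M M1 : S × ℕ → Option LaAtVal} {n1 : ℕ} :
      M (q, i) = none → q ∉ A.F → A.T q = SubTrans.sub Kind.at A' q' →
      MemoLaAtRun w A0 A' A'.q0 i M M1 (.failure j) n1 →
      A0.nu q < j →
      MemoLaAtRun w A0 A q i M (laAtRecord M1 q i (.failure (A0.nu q)))
        (.failure (A0.nu q)) (n1 + 1)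
  | atFailLow {A0 A A' : SubNFA Sigma S} {q q' : S} {i j : ℕ}
      {M M1 : S × ℕ → Option LaAtVal} {n1 : ℕ} :
      M (q, i) = none → q ∉ A.F → A.T q = SubTrans.sub Kind.at A' q' →
      MemoLaAtRun w A0 A' A'.q0 i M M1 (.failure j) n1 →
      j ≤ A0.nu q →
      MemoLaAtRun w A0 A q i M (laAtRecord M1 q i (.failure j)) (.failure j) (n1 + 1)



/-! ## Auxiliary material for Lemma 12 -/

/-- The sub-automaton labelling a transition, if any. -/
def SubTrans.kid : SubTrans Sigma S → List (SubNFA Sigma S)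
  | .sub _ A' _ => [A']
  | _ => []

/-- The direct sub-automata of an automaton. -/
def SubNFA.kids (A : SubNFA Sigma S) : List (SubNFA Sigma S) :=
  A.Q.flatMap fun q => (A.T q).kid

theorem comps_mk (Q : List S) (q0 : S) (F : List S) (T : S → SubTrans Sigma S) :
    (SubNFA.mk Q q0 F T).comps =
      SubNFA.mk Q q0 F T :: Q.flatMap (fun q => (T q).subCompsD.map Prod.fst) := by
  simp [SubNFA.comps, SubNFA.compsD, List.map_flatMap]

mutual
theorem comps_perm : (A : SubNFA Sigma S) →
    List.Perm A.comps (A :: A.comps.flatMap SubNFA.kids)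
  | .mk Q q0 F T => by
    rw [comps_mk]
    refine List.Perm.cons _ ?_
    rw [List.flatMap_cons, List.flatMap_assoc]
    refine List.Perm.trans (List.Perm.flatMap_left Q (fun q _ => subComps_perm (T q))) ?_
    exact (List.flatMap_append_perm Q (fun q => (T q).kid)
      (fun q => ((T q).subCompsD.map Prod.fst).flatMap SubNFA.kids)).symm

theorem subComps_perm : (t : SubTrans Sigma S) →
    List.Perm (t.subCompsD.map Prod.fst)
      (t.kid ++ (t.subCompsD.map Prod.fst).flatMap SubNFA.kids)
  | .eps _ => by simp [SubTrans.subCompsD, SubTrans.kid]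
  | .branch _ _ => by simp [SubTrans.subCompsD, SubTrans.kid]
  | .char _ _ => by simp [SubTrans.subCompsD, SubTrans.kid]
  | .sub k A' _ => by
    have h := comps_perm A'
    simpa [SubTrans.subCompsD, SubTrans.kid, SubNFA.comps, Function.comp_def] using h
end

mutual
theorem compsD_child : (A : SubNFA Sigma S) → ∀ {B A' : SubNFA Sigma S} {d : ℕ} {q q' : S},
    (B, d) ∈ A.compsD → q ∈ B.Q → B.T q = SubTrans.sub Kind.at A' q' →
    (A', d + 1) ∈ A.compsD
  | .mk Q q0 F T => by
    intro hB hq hT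
    rename_i B A' d q q'
    rw [SubNFA.compsD] at hB ⊢
    rcases List.mem_cons.1 hB with h | h
    · obtain ⟨rfl, rfl⟩ := Prod.mk.inj h
      refine List.mem_cons_of_mem _ (List.mem_flatMap.2 ⟨q, hq, ?_⟩)
      simp only [SubNFA.T] at hT
      rw [hT]
      cases A'
      simp [SubTrans.subCompsD, SubNFA.compsD]
    · obtain ⟨p, hp, h⟩ := List.mem_flatMap.1 h
      exact List.mem_cons_of_mem _ (List.mem_flatMap.2 ⟨p, hp, subCompsD_child (T p) h hq hT⟩)

theorem subCompsD_child : (t : SubTrans Sigma S) →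
    ∀ {B A' : SubNFA Sigma S} {d : ℕ} {q q' : S},
    (B, d) ∈ t.subCompsD → q ∈ B.Q → B.T q = SubTrans.sub Kind.at A' q' →
    (A', d + 1) ∈ t.subCompsD
  | .eps _ => by simp [SubTrans.subCompsD]
  | .branch _ _ => by simp [SubTrans.subCompsD]
  | .char _ _ => by simp [SubTrans.subCompsD]
  | .sub k C _ => by
    intro hB hq hT
    rename_i B A' d q q'
    rw [SubTrans.subCompsD] at hB ⊢
    obtain ⟨⟨B', d'⟩, h, he⟩ := List.mem_map.1 hB
    simp only [Prod.mk.injEq] at he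
    obtain ⟨rfl, rfl⟩ := he
    have := compsD_child C h hq hT
    exact List.mem_map.2 ⟨_, this, by simp; omega⟩
end

theorem pw_disj {β γ : Type} {f : β → List γ} {l : List β}
    (hn : List.Pairwise (Function.onFun List.Disjoint f) l) {a b : β} (ha : a ∈ l) (hb : b ∈ l)
    (hne : a ≠ b) : List.Disjoint (f a) (f b) := by
  have : Std.Symm (Function.onFun List.Disjoint f) := ⟨fun _ _ h => List.Disjoint.symm h⟩
  exact List.Pairwise.forall hn ha hb hne

theorem comp_unique {A B1 B2 : SubNFA Sigma S} (hWF : A.WF) (h1 : B1 ∈ A.comps)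
    (h2 : B2 ∈ A.comps) {p : S} (hp1 : p ∈ B1.Q) (hp2 : p ∈ B2.Q) : B1 = B2 := by
  by_contra hne
  have hn := (List.nodup_flatMap.1 hWF.2).2
  exact pw_disj hn h1 h2 hne hp1 hp2

theorem states_perm (A : SubNFA Sigma S) : List.Perm A.allStates
    (A.Q ++ A.comps.flatMap fun B => B.Q.flatMap fun q => (B.T q).kid.flatMap SubNFA.Q) := by
  have h := (comps_perm A).flatMap_right SubNFA.Q
  rw [List.flatMap_cons, List.flatMap_assoc] at h
  simpa [SubNFA.allStates, SubNFA.kids, List.flatMap_assoc] using h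

theorem child_mem {A B A' : SubNFA Sigma S} {k : Kind} {q q' : S} (h : B ∈ A.comps)
    (hq : q ∈ B.Q) (hT : B.T q = SubTrans.sub k A' q') : A' ∈ A.comps := by
  rw [(comps_perm A).mem_iff]
  refine List.mem_cons_of_mem _ (List.mem_flatMap.2 ⟨B, h, List.mem_flatMap.2 ⟨q, hq, ?_⟩⟩)
  simp [hT, SubTrans.kid]

theorem root_not_child {A B : SubNFA Sigma S} {k : Kind} {q q' : S} (hWF : A.WF)
    (h : B ∈ A.comps) (hq : q ∈ B.Q) (hT : B.T q = SubTrans.sub k A q') : False := by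
  have hn := (states_perm A).nodup_iff.1 hWF.2
  have hA : A ∈ A.comps := child_mem h hq hT
  have h0 := (hWF.1 A hA).1
  refine (List.nodup_append'.1 hn).2.2 h0 (List.mem_flatMap.2 ⟨B, h, List.mem_flatMap.2 ⟨q, hq, ?_⟩⟩)
  simpa [hT, SubTrans.kid] using h0

theorem parent_unique {A B1 B2 A' : SubNFA Sigma S} {k1 k2 : Kind} {q1 q2 q1' q2' : S}
    (hWF : A.WF) (h1 : B1 ∈ A.comps) (hq1 : q1 ∈ B1.Q)
    (hT1 : B1.T q1 = SubTrans.sub k1 A' q1') (h2 : B2 ∈ A.comps) (hq2 : q2 ∈ B2.Q)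
    (hT2 : B2.T q2 = SubTrans.sub k2 A' q2') : q1' = q2' := by
  have hn := (List.nodup_append'.1 ((states_perm A).nodup_iff.1 hWF.2)).2.1
  have h0 := (hWF.1 A' (child_mem h1 hq1 hT1)).1
  have m1 : A'.q0 ∈ (B1.T q1).kid.flatMap SubNFA.Q := by simpa [hT1, SubTrans.kid] using h0
  have m2 : A'.q0 ∈ (B2.T q2).kid.flatMap SubNFA.Q := by simpa [hT2, SubTrans.kid] using h0
  have hn' := List.nodup_flatMap.1 hn
  have hB : B1 = B2 := by
    by_contra hne
    have key := pw_disj hn'.2 h1 h2 hne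
    exact key (List.mem_flatMap.2 ⟨q1, hq1, m1⟩) (List.mem_flatMap.2 ⟨q2, hq2, m2⟩)
  subst hB
  have hn2 := List.nodup_flatMap.1 (hn'.1 _ h1)
  have hq : q1 = q2 := by
    by_contra hne
    have key := pw_disj hn2.2 hq1 hq2 hne
    exact key m1 m2
  subst hq
  rw [hT1] at hT2
  injection hT2

theorem nu_const [DecidableEq S] {A B : SubNFA Sigma S} (hWF : A.WF) (h : B ∈ A.comps)
    {p p' : S} (hp : p ∈ B.Q) (hp' : p' ∈ B.Q) : A.nu p = A.nu p' := by
  unfold SubNFA.nu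
  congr 1
  refine List.map_congr_left fun x hx => ?_
  have hx' : x.1 ∈ A.comps := List.mem_map.2 ⟨x, hx, rfl⟩
  have : p ∈ x.1.Q ↔ p' ∈ x.1.Q := by
    constructor
    · intro hh
      rw [comp_unique hWF hx' h hh hp]; exact hp'
    · intro hh
      rw [comp_unique hWF hx' h hh hp']; exact hp
  simp [this]

theorem sum_eq_depth [DecidableEq S] {q : S} {B : SubNFA Sigma S} {d : ℕ} :
    (l : List (SubNFA Sigma S × ℕ)) → ((l.map Prod.fst).flatMap SubNFA.Q).Nodup →
    (B, d) ∈ l → q ∈ B.Q → (l.map (fun p => if q ∈ p.1.Q then p.2 else 0)).sum = d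
  | [], _, h, _ => by simp at h
  | x :: l, hn, h, hq => by
    rw [List.map_cons, List.flatMap_cons, List.nodup_append'] at hn
    obtain ⟨_, hl, hd⟩ := hn
    rw [List.map_cons, List.sum_cons]
    rcases List.mem_cons.1 h with h | h
    · subst h
      have : (l.map (fun p => if q ∈ p.1.Q then p.2 else 0)).sum = 0 := by
        rw [List.sum_eq_zero_iff]
        intro y hy
        obtain ⟨z, hz, rfl⟩ := List.mem_map.1 hy
        rw [if_neg]
        intro hqz
        exact hd hq (List.mem_flatMap.2 ⟨z.1, List.mem_map.2 ⟨z, hz, rfl⟩, hqz⟩)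
      simp [this, hq]
    · rw [sum_eq_depth l hl h hq, if_neg, Nat.zero_add]
      intro hqx
      exact hd hqx (List.mem_flatMap.2 ⟨B, List.mem_map.2 ⟨_, h, rfl⟩, hq⟩)

theorem nu_child [DecidableEq S] {A B A' : SubNFA Sigma S} (hWF : A.WF) (h : B ∈ A.comps)
    {q q' p : S} (hq : q ∈ B.Q) (hT : B.T q = SubTrans.sub Kind.at A' q') (hp : p ∈ A'.Q) :
    A.nu q < A.nu p := by
  obtain ⟨⟨B', d⟩, hd, he⟩ := List.mem_map.1 h
  simp only at he
  subst he
  have h1 : A.nu q = d := sum_eq_depth _ hWF.2 hd hq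
  have h2 : A.nu p = d + 1 := sum_eq_depth _ hWF.2 (compsD_child A hd hq hT) hp
  omega

/-- Table-free evaluation in continuation-passing style: `Ev A0 q i v n` means that
running `A0` from the configuration `(q,i)`, including what follows the enclosing atomic
groups, gives `v` (`none` for overall success, `some j` for `Failure(j)`) in `n` steps. -/
inductive Ev [DecidableEq S] (A0 : SubNFA Sigma S) (w : List Sigma) :
    S → ℕ → Option ℕ → ℕ → Prop where
  | acceptTop {q : S} {i : ℕ} : A0 ∈ A0.comps → q ∈ A0.Q → q ∈ A0.F → Ev A0 w q i none 1
  | acceptSub {A B : SubNFA Sigma S} {q p p' : S} {i n : ℕ} {v : Option ℕ} :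
      A ∈ A0.comps → q ∈ A.Q → q ∈ A.F → B ∈ A0.comps → p ∈ B.Q → p ∉ B.F →
      B.T p = SubTrans.sub Kind.at A p' → Ev A0 w p' i v n → Ev A0 w q i v (n + 1)
  | eps {A : SubNFA Sigma S} {q q' : S} {i n : ℕ} {v : Option ℕ} :
      A ∈ A0.comps → q ∈ A.Q → q ∉ A.F → A.T q = SubTrans.eps q' →
      Ev A0 w q' i v n → Ev A0 w q i v (n + 1)
  | branch1 {A : SubNFA Sigma S} {q q' q'' : S} {i n : ℕ} {v : Option ℕ} :
      A ∈ A0.comps → q ∈ A.Q → q ∉ A.F → A.T q = SubTrans.branch q' q'' →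
      Ev A0 w q' i v n → v ≠ some (A0.nu q) → Ev A0 w q i v (n + 1)
  | branch2 {A : SubNFA Sigma S} {q q' q'' : S} {i n1 n2 : ℕ} {v : Option ℕ} :
      A ∈ A0.comps → q ∈ A.Q → q ∉ A.F → A.T q = SubTrans.branch q' q'' →
      Ev A0 w q' i (some (A0.nu q)) n1 → Ev A0 w q'' i v n2 → Ev A0 w q i v (n1 + n2 + 1)
  | charSucc {A : SubNFA Sigma S} {q q' : S} {σ : Sigma} {i n : ℕ} {v : Option ℕ} :
      A ∈ A0.comps → q ∈ A.Q → q ∉ A.F → A.T q = SubTrans.char σ q' → w[i]? = some σ →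
      Ev A0 w q' (i + 1) v n → Ev A0 w q i v (n + 1)
  | charFail {A : SubNFA Sigma S} {q q' : S} {σ : Sigma} {i : ℕ} :
      A ∈ A0.comps → q ∈ A.Q → q ∉ A.F → A.T q = SubTrans.char σ q' → w[i]? ≠ some σ →
      Ev A0 w q i (some (A0.nu q)) 1
  | subHigh {A A' : SubNFA Sigma S} {q q' : S} {i n j : ℕ} :
      A ∈ A0.comps → q ∈ A.Q → q ∉ A.F → A.T q = SubTrans.sub Kind.at A' q' →
      Ev A0 w A'.q0 i (some j) n → A0.nu q < j → Ev A0 w q i (some (A0.nu q)) (n + 1)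
  | subLow {A A' : SubNFA Sigma S} {q q' : S} {i n : ℕ} {v : Option ℕ} :
      A ∈ A0.comps → q ∈ A.Q → q ∉ A.F → A.T q = SubTrans.sub Kind.at A' q' →
      Ev A0 w A'.q0 i v n → (∀ j, v = some j → j ≤ A0.nu q) → Ev A0 w q i v (n + 1)

theorem Ev.pos [DecidableEq S] {A0 : SubNFA Sigma S} {w : List Sigma} {q : S} {i n : ℕ}
    {v : Option ℕ} (h : Ev A0 w q i v n) : 0 < n := by
  cases h <;> omega

theorem Ev.bound [DecidableEq S] {A0 : SubNFA Sigma S} {w : List Sigma} (hWF : A0.WF) {q : S}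
    {i n : ℕ} {v : Option ℕ} (h : Ev A0 w q i v n) : ∀ j, v = some j → j ≤ A0.nu q := by
  induction h with
  | acceptTop => simp
  | acceptSub hA hq hF hB hp hpF hT _ ih =>
    intro j hj
    have h1 := ih j hj
    have h2 := nu_child hWF hB hp hT hq
    have h3 := (hWF.1 _ hB).2.2 _ hp hpF
    rw [hT] at h3
    have h4 := nu_const hWF hB h3 hp
    omega
  | eps hA hq hF hT _ ih =>
    intro j hj
    have h3 := (hWF.1 _ hA).2.2 _ hq hF
    rw [hT] at h3
    rw [nu_const hWF hA hq h3]
    exact ih j hj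
  | branch1 hA hq hF hT _ _ ih =>
    intro j hj
    have h3 := (hWF.1 _ hA).2.2 _ hq hF
    rw [hT] at h3
    rw [nu_const hWF hA hq h3.1]
    exact ih j hj
  | branch2 hA hq hF hT _ _ _ ih =>
    intro j hj
    have h3 := (hWF.1 _ hA).2.2 _ hq hF
    rw [hT] at h3
    rw [nu_const hWF hA hq h3.2]
    exact ih j hj
  | charSucc hA hq hF hT _ _ ih =>
    intro j hj
    have h3 := (hWF.1 _ hA).2.2 _ hq hF
    rw [hT] at h3
    rw [nu_const hWF hA hq h3]
    exact ih j hj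
  | charFail => intro j hj; injection hj with hj; omega
  | subHigh => intro j hj; injection hj with hj; omega
  | subLow _ _ _ _ _ h => exact h

theorem Ev.det [DecidableEq S] {A0 : SubNFA Sigma S} {w : List Sigma} (hWF : A0.WF) {q : S}
    {i n : ℕ} {v : Option ℕ} (h : Ev A0 w q i v n) :
    ∀ {v' n'}, Ev A0 w q i v' n' → v = v' ∧ n = n' := by
  have inv : ∀ {A : SubNFA Sigma S} {q : S} {i : ℕ} {v n}, A ∈ A0.comps → q ∈ A.Q → q ∉ A.F →
      Ev A0 w q i v n →
      (∃ q' m, A.T q = SubTrans.eps q' ∧ Ev A0 w q' i v m ∧ n = m + 1) ∨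
      (∃ q' q'' m, A.T q = SubTrans.branch q' q'' ∧ Ev A0 w q' i v m ∧ v ≠ some (A0.nu q) ∧
        n = m + 1) ∨
      (∃ q' q'' m m2, A.T q = SubTrans.branch q' q'' ∧ Ev A0 w q' i (some (A0.nu q)) m ∧
        Ev A0 w q'' i v m2 ∧ n = m + m2 + 1) ∨
      (∃ σ q' m, A.T q = SubTrans.char σ q' ∧ w[i]? = some σ ∧ Ev A0 w q' (i + 1) v m ∧
        n = m + 1) ∨
      (∃ σ q', A.T q = SubTrans.char σ q' ∧ w[i]? ≠ some σ ∧ v = some (A0.nu q) ∧ n = 1) ∨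
      (∃ A' q' m j, A.T q = SubTrans.sub Kind.at A' q' ∧ Ev A0 w A'.q0 i (some j) m ∧
        A0.nu q < j ∧ v = some (A0.nu q) ∧ n = m + 1) ∨
      (∃ A' q' m, A.T q = SubTrans.sub Kind.at A' q' ∧ Ev A0 w A'.q0 i v m ∧
        (∀ j, v = some j → j ≤ A0.nu q) ∧ n = m + 1) := by
    intro A q i v n hA hq hF h'
    rcases h' with ⟨hA', hq', hF'⟩ | ⟨hA', hq', hF', _, _, _, _, _⟩ | ⟨hA', hq', hF', hT', h2⟩ |
      ⟨hA', hq', hF', hT', h2, h3⟩ | ⟨hA', hq', hF', hT', h2, h3⟩ | ⟨hA', hq', hF', hT', h2, h3⟩ |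
      ⟨hA', hq', hF', hT', h2⟩ | ⟨hA', hq', hF', hT', h2, h3⟩ | ⟨hA', hq', hF', hT', h2, h3⟩
    all_goals
      have e := comp_unique hWF hA hA' hq hq'
      subst e
    · contradiction
    · contradiction
    · exact Or.inl ⟨_, _, hT', h2, rfl⟩
    · exact Or.inr (Or.inl ⟨_, _, _, hT', h2, h3, rfl⟩)
    · exact Or.inr (Or.inr (Or.inl ⟨_, _, _, _, hT', h2, h3, rfl⟩))
    · exact Or.inr (Or.inr (Or.inr (Or.inl ⟨_, _, _, hT', h2, h3, rfl⟩)))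
    · exact Or.inr (Or.inr (Or.inr (Or.inr (Or.inl ⟨_, _, hT', h2, rfl, rfl⟩))))
    · exact Or.inr (Or.inr (Or.inr (Or.inr (Or.inr (Or.inl ⟨_, _, _, _, hT', h2, h3, rfl, rfl⟩)))))
    · exact Or.inr (Or.inr (Or.inr (Or.inr (Or.inr (Or.inr ⟨_, _, _, hT', h2, h3, rfl⟩)))))
  have invF : ∀ {A : SubNFA Sigma S} {q : S} {i : ℕ} {v n}, A ∈ A0.comps → q ∈ A.Q → q ∈ A.F →
      Ev A0 w q i v n → (A = A0 ∧ v = none ∧ n = 1) ∨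
      ∃ B p p' m, B ∈ A0.comps ∧ p ∈ B.Q ∧ B.T p = SubTrans.sub Kind.at A p' ∧
        Ev A0 w p' i v m ∧ n = m + 1 := by
    intro A q i v n hA hq hF h'
    rcases h' with ⟨hA', hq', hF'⟩ | ⟨hA', hq', hF', h1, h2, h3, h4, h5⟩ | ⟨hA', hq', hF'⟩ |
      ⟨hA', hq', hF'⟩ | ⟨hA', hq', hF'⟩ | ⟨hA', hq', hF'⟩ | ⟨hA', hq', hF'⟩ | ⟨hA', hq', hF'⟩ |
      ⟨hA', hq', hF'⟩
    all_goals
      have e := comp_unique hWF hA hA' hq hq'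
      subst e
      try contradiction
    · exact Or.inl ⟨rfl, rfl, rfl⟩
    · exact Or.inr ⟨_, _, _, _, h1, h2, h4, h5, rfl⟩
  induction h with
  | acceptTop hA hq hF =>
    intro v' n' h'
    rcases invF hA hq hF h' with ⟨_, rfl, rfl⟩ | ⟨B, p, p', m, hB, hp, hT, _⟩
    · exact ⟨rfl, rfl⟩
    · exact (root_not_child hWF hB hp hT).elim
  | acceptSub hA hq hF hB hp hpF hT _ ih =>
    intro v' n' h'
    rcases invF hA hq hF h' with ⟨rfl, rfl, rfl⟩ | ⟨B', p2, p2', m, hB', hp', hT', h2, rfl⟩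
    · exact (root_not_child hWF hB hp hT).elim
    · obtain rfl := parent_unique hWF hB hp hT hB' hp' hT'
      obtain ⟨rfl, rfl⟩ := ih h2
      exact ⟨rfl, rfl⟩
  | eps hA hq hF hT _ ih =>
    intro v' n' h'
    have H := inv hA hq hF h'
    clear inv invF
    simp only [hT, reduceCtorEq, false_and, exists_false, or_false, false_or,
      SubTrans.eps.injEq] at H
    obtain ⟨_, m, rfl, h2, rfl⟩ := H
    obtain ⟨rfl, rfl⟩ := ih h2
    exact ⟨rfl, rfl⟩
  | branch1 hA hq hF hT _ hv ih =>
    intro v' n' h'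
    have H := inv hA hq hF h'
    clear inv invF
    simp only [hT, reduceCtorEq, false_and, exists_false, or_false, false_or,
      SubTrans.branch.injEq] at H
    rcases H with ⟨_, _, m, ⟨rfl, rfl⟩, h2, _, rfl⟩ | ⟨_, _, m, m2, ⟨rfl, rfl⟩, h2, _, rfl⟩
    · obtain ⟨rfl, rfl⟩ := ih h2
      exact ⟨rfl, rfl⟩
    · exact absurd (ih h2).1 hv
  | branch2 hA hq hF hT _ _ ih1 ih2 =>
    intro v' n' h'
    have H := inv hA hq hF h'
    clear inv invF
    simp only [hT, reduceCtorEq, false_and, exists_false, or_false, false_or,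
      SubTrans.branch.injEq] at H
    rcases H with ⟨_, _, m, ⟨rfl, rfl⟩, h2, hv, rfl⟩ | ⟨_, _, m, m2, ⟨rfl, rfl⟩, h2, h3, rfl⟩
    · exact absurd (ih1 h2).1.symm hv
    · obtain ⟨_, rfl⟩ := ih1 h2
      obtain ⟨rfl, rfl⟩ := ih2 h3
      exact ⟨rfl, rfl⟩
  | charSucc hA hq hF hT hw _ ih =>
    intro v' n' h'
    have H := inv hA hq hF h'
    clear inv invF
    simp only [hT, reduceCtorEq, false_and, exists_false, or_false, false_or,
      SubTrans.char.injEq] at H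
    rcases H with ⟨_, _, m, ⟨rfl, rfl⟩, _, h2, rfl⟩ | ⟨_, _, ⟨rfl, rfl⟩, h2, _⟩
    · obtain ⟨rfl, rfl⟩ := ih h2
      exact ⟨rfl, rfl⟩
    · exact absurd hw h2
  | charFail hA hq hF hT hw =>
    intro v' n' h'
    have H := inv hA hq hF h'
    clear inv invF
    simp only [hT, reduceCtorEq, false_and, exists_false, or_false, false_or,
      SubTrans.char.injEq] at H
    rcases H with ⟨_, _, m, ⟨rfl, rfl⟩, h2, _⟩ | ⟨_, _, ⟨rfl, rfl⟩, h2, rfl, rfl⟩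
    · exact absurd h2 hw
    · exact ⟨rfl, rfl⟩
  | subHigh hA hq hF hT _ hj ih =>
    intro v' n' h'
    have H := inv hA hq hF h'
    clear inv invF
    simp only [hT, reduceCtorEq, false_and, exists_false, or_false, false_or,
      SubTrans.sub.injEq, true_and] at H
    rcases H with ⟨_, _, m, j', ⟨rfl, rfl⟩, h2, _, rfl, rfl⟩ | ⟨_, _, m, ⟨rfl, rfl⟩, h2, h3, rfl⟩
    · obtain ⟨_, rfl⟩ := ih h2
      exact ⟨rfl, rfl⟩
    · have := h3 _ (ih h2).1.symm
      omega
  | subLow hA hq hF hT _ hj ih =>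
    intro v' n' h'
    have H := inv hA hq hF h'
    clear inv invF
    simp only [hT, reduceCtorEq, false_and, exists_false, or_false, false_or,
      SubTrans.sub.injEq, true_and] at H
    rcases H with ⟨_, _, m, j', ⟨rfl, rfl⟩, h2, h3, rfl, rfl⟩ | ⟨_, _, m, ⟨rfl, rfl⟩, h2, h3, rfl⟩
    · have := hj _ (ih h2).1
      omega
    · obtain ⟨rfl, rfl⟩ := ih h2
      exact ⟨rfl, rfl⟩

/-- Delayed keys of a result. -/
def AtResult.keys : AtResult S → Finset (S × ℕ)
  | .successAt _ K => K
  | .failure _ => ∅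

/-- Every entry of the table is justified by a table-free evaluation. -/
def TabSound [DecidableEq S] (A0 : SubNFA Sigma S) (w : List Sigma) (M : S × ℕ → Option ℕ) :
    Prop :=
  ∀ p x j, M (p, x) = some j → ∃ n, Ev A0 w p x (some j) n

/-- What happens after a call in the automaton `A` returns the result. -/
def AfterRes [DecidableEq S] (A0 : SubNFA Sigma S) (w : List Sigma) (A : SubNFA Sigma S)
    (r : AtResult S) (v : Option ℕ) (m : ℕ) : Prop :=
  match r with
  | .failure j => v = some j ∧ m = 0
  | .successAt i' _ => (A = A0 ∧ v = none ∧ m = 0) ∨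
      ∃ B p p', B ∈ A0.comps ∧ p ∈ B.Q ∧ p ∉ B.F ∧ B.T p = SubTrans.sub Kind.at A p' ∧
        Ev A0 w p' i' v m

theorem afterRes_lt [DecidableEq S] {A0 A : SubNFA Sigma S} {w : List Sigma} (hWF : A0.WF)
    {q : S} (hq : q ∈ A.Q) {i' j m : ℕ} {K : Finset (S × ℕ)}
    (h : AfterRes A0 w A (.successAt i' K) (some j) m) : j < A0.nu q := by
  rcases h with ⟨_, h, _⟩ | ⟨B, p, p', hB, hp, hpF, hT, hE⟩
  · cases h
  · have h1 := hE.bound hWF j rfl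
    have h2 := nu_child hWF hB hp hT hq
    have h3 := (hWF.1 _ hB).2.2 _ hp hpF
    rw [hT] at h3
    have h4 := nu_const hWF hB h3 hp
    omega

/-- Postcondition of a call of `Memo-at`. -/
structure Post [DecidableEq S] (A0 : SubNFA Sigma S) (w : List Sigma) (A : SubNFA Sigma S)
    (q : S) (i : ℕ) (M M' : S × ℕ → Option ℕ) (r : AtResult S) (s : List (AtRunElem S)) :
    Prop where
  mono : ∀ k, M k ≠ none → M' k ≠ none
  calls : ∀ p x, AtRunElem.call p x ∈ s → M (p, x) = none ∧ (M' (p, x) ≠ none ∨ (p, x) ∈ r.keys)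
  sound : TabSound A0 w M'
  fin : ∀ v m, AfterRes A0 w A r v m → ∃ n, Ev A0 w q i v n ∧ m < n ∧
    (∀ p x, AtRunElem.call p x ∈ s → ∃ v' n', Ev A0 w p x v' n' ∧ n' ≤ n) ∧
    (∀ p x, s.count (AtRunElem.call p x) ≤ 1) ∧
    ∀ c ∈ r.keys, ∃ n', Ev A0 w c.1 c.2 v n' ∧ m < n'

theorem Post.finish [DecidableEq S] {A0 : SubNFA Sigma S} {w : List Sigma} {A : SubNFA Sigma S}
    (hWF : A0.WF) {q : S} {i : ℕ} {M M1 : S × ℕ → Option ℕ} {r : AtResult S}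
    {t : List (AtRunElem S)} {e : AtRunElem S}
    (hM : M (q, i) = none) (he : ∀ p x, e ≠ AtRunElem.call p x)
    (mono : ∀ k, M k ≠ none → M1 k ≠ none)
    (calls : ∀ p x, AtRunElem.call p x ∈ t →
      M (p, x) = none ∧ (M1 (p, x) ≠ none ∨ (p, x) ∈ r.keys))
    (sound : TabSound A0 w M1)
    (fin : ∀ v m, AfterRes A0 w A r v m → ∃ n0 n, Ev A0 w q i v n ∧ m < n ∧ n0 < n ∧
      (∀ p x, AtRunElem.call p x ∈ t → ∃ v' n', Ev A0 w p x v' n' ∧ n' ≤ n0) ∧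
      (∀ p x, t.count (AtRunElem.call p x) ≤ 1) ∧
      ∀ c ∈ r.keys, ∃ n', Ev A0 w c.1 c.2 v n' ∧ m < n') :
    Post A0 w A q i M (atRecord M1 q i r) (atFinal q i r) (.call q i :: t ++ [e]) := by
  have hmem : ∀ p x, AtRunElem.call p x ∈ (.call q i :: t ++ [e]) →
      (p = q ∧ x = i) ∨ AtRunElem.call p x ∈ t := by
    intro p x h
    have := he p x
    simp only [List.cons_append, List.mem_cons, List.mem_append, List.not_mem_nil, or_false,
      AtRunElem.call.injEq] at h
    rcases h with h | h | h
    · exact Or.inl h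
    · exact Or.inr h
    · exact absurd h.symm this
  have hrec : ∀ k, M1 k ≠ none → atRecord M1 q i r k ≠ none := by
    intro k hk
    cases r with
    | successAt i' K => exact hk
    | failure j => simp only [atRecord]; split <;> simp [hk]
  refine ⟨fun k hk => hrec k (mono k hk), ?_, ?_, ?_⟩
  · intro p x h
    rcases hmem p x h with ⟨rfl, rfl⟩ | h
    · refine ⟨hM, ?_⟩
      cases r with
      | successAt i' K => right; simp [atFinal, AtResult.keys]
      | failure j => left; simp [atRecord]
    · refine ⟨(calls p x h).1, ?_⟩
      rcases (calls p x h).2 with h | h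
      · exact Or.inl (hrec _ h)
      · right
        cases r with
        | successAt i' K => exact Finset.mem_insert_of_mem h
        | failure j => exact h
  · cases r with
    | successAt i' K => exact sound
    | failure j =>
      intro p x j' h
      simp only [atRecord] at h
      split at h
      · rename_i hpx
        obtain ⟨rfl, rfl⟩ := Prod.mk.inj hpx
        injection h with h
        subst h
        obtain ⟨_, n, h, _⟩ := fin (some j) 0 ⟨rfl, rfl⟩
        exact ⟨n, h⟩
      · exact sound p x j' h
  · intro v m hfin
    have hfin' : AfterRes A0 w A r v m := by
      cases r with
      | successAt i' K => exact hfin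
      | failure j => exact hfin
    obtain ⟨n0, n, hE, hmn, hn0, h1, h2, h3⟩ := fin v m hfin'
    refine ⟨n, hE, hmn, ?_, ?_, ?_⟩
    · intro p x h
      rcases hmem p x h with ⟨rfl, rfl⟩ | h
      · exact ⟨v, n, hE, le_rfl⟩
      · obtain ⟨v', n', h, hle⟩ := h1 p x h
        exact ⟨v', n', h, by omega⟩
    · intro p x
      have hz : List.count (AtRunElem.call p x) [e] = 0 := by
        rw [List.count_eq_zero]
        intro h
        exact he p x (List.mem_singleton.1 h).symm
      rw [List.cons_append, List.count_cons, List.count_append, hz]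
      by_cases hpx : (AtRunElem.call q i : AtRunElem S) = AtRunElem.call p x
      · have hnot : AtRunElem.call p x ∉ t := by
          intro h
          rw [← hpx] at h
          obtain ⟨v', n', h, hle⟩ := h1 q i h
          have := (hE.det hWF h).2
          omega
        rw [List.count_eq_zero.2 hnot]
        split <;> omega
      · have := h2 p x
        simp [hpx]
        omega
    · intro c hc
      cases r with
      | successAt i' K =>
        rcases Finset.mem_insert.1 hc with rfl | hc
        · exact ⟨n, hE, hmn⟩
        · exact h3 c hc
      | failure j => exact h3 c hc

theorem elem_ne_call (r : AtResult S) (p : S) (x : ℕ) : r.elem ≠ AtRunElem.call p x := by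
  cases r <;> simp [AtResult.elem]

theorem memoAt_post [DecidableEq S] {A0 : SubNFA Sigma S} {w : List Sigma} (hWF : A0.WF)
    {A : SubNFA Sigma S} {q : S} {i : ℕ} {M M' : S × ℕ → Option ℕ} {r : AtResult S}
    {s : List (AtRunElem S)} (h : MemoAtRun A0 w A q i M M' r s) :
    A ∈ A0.comps → q ∈ A.Q → TabSound A0 w M → Post A0 w A q i M M' r s := by
  -- run of two consecutive bodies whose calls are disjoint
  have cnt2 : ∀ {s1 s2 : List (AtRunElem S)},
      (∀ p x, s1.count (AtRunElem.call p x) ≤ 1) → (∀ p x, s2.count (AtRunElem.call p x) ≤ 1) →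
      (∀ p x, AtRunElem.call p x ∈ s1 → AtRunElem.call p x ∈ s2 → False) →
      ∀ p x, (s1 ++ s2).count (AtRunElem.call p x) ≤ 1 := by
    intro s1 s2 h1 h2 hd p x
    rw [List.count_append]
    by_cases h : AtRunElem.call p x ∈ s1
    · rw [List.count_eq_zero.2 (hd p x h)]
      exact h1 p x
    · rw [List.count_eq_zero.2 h]
      have := h2 p x
      omega
  induction h with
  | @memoHit A q i j M hM =>
    intro hA hq hs
    refine ⟨fun _ h => h, by simp, hs, ?_⟩
    rintro v m ⟨rfl, rfl⟩
    obtain ⟨n, hn⟩ := hs q i j hM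
    exact ⟨n, hn, hn.pos, by simp, by simp, by simp [AtResult.keys]⟩
  | @accept A q i M hM hF =>
    intro hA hq hs
    have := Post.finish (A := A) (r := .successAt i ∅) (t := []) (e := .succ i) hWF hM (by simp)
      (fun _ h => h) (by simp) hs (by
        intro v m hfin
        refine ⟨0, m + 1, ?_, by omega, by omega, by simp, by simp, by simp [AtResult.keys]⟩
        rcases hfin with ⟨rfl, rfl, rfl⟩ | ⟨B, p, p', hB, hp, hpF, hT, hE⟩
        · exact Ev.acceptTop hA hq hF
        · exact Ev.acceptSub hA hq hF hB hp hpF hT hE)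
    simpa [atRecord, atFinal] using this
  | @eps A q q' i M M' r s hM hF hT _ ih =>
    intro hA hq hs
    have hl := (hWF.1 _ hA).2.2 _ hq hF
    rw [hT] at hl
    have P := ih hA hl hs
    refine Post.finish hWF hM (elem_ne_call r) P.mono P.calls P.sound ?_
    intro v m hfin
    obtain ⟨n, hE, hmn, h1, h2, h3⟩ := P.fin v m hfin
    exact ⟨n, n + 1, Ev.eps hA hq hF hT hE, by omega, by omega, h1, h2, h3⟩
  | @branchNoBT A q q' q'' i M M' r s hM hF hT _ hr ih =>
    intro hA hq hs
    have hl := (hWF.1 _ hA).2.2 _ hq hF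
    rw [hT] at hl
    have P := ih hA hl.1 hs
    refine Post.finish hWF hM (elem_ne_call r) P.mono P.calls P.sound ?_
    intro v m hfin
    obtain ⟨n, hE, hmn, h1, h2, h3⟩ := P.fin v m hfin
    refine ⟨n, n + 1, Ev.branch1 hA hq hF hT hE ?_, by omega, by omega, h1, h2, h3⟩
    rintro rfl
    cases r with
    | successAt i' K => exact absurd (afterRes_lt hWF hq hfin) (lt_irrefl _)
    | failure j =>
      have := hfin.1
      injection this with this
      exact hr j rfl this.symm
  | @branchBTSucc A q q' q'' i i'' K M M1 M2 s1 s2 hM hF hT _ _ ih1 ih2 =>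
    intro hA hq hs
    have hl := (hWF.1 _ hA).2.2 _ hq hF
    rw [hT] at hl
    have P1 := ih1 hA hl.1 hs
    have P2 := ih2 hA hl.2 P1.sound
    obtain ⟨n1, hE1, _, h11, h12, _⟩ := P1.fin _ _ ⟨rfl, rfl⟩
    have := Post.finish (A := A) (r := .successAt i'' K) (t := s1 ++ s2) (e := .succ i'') hWF hM
      (by simp) (fun k hk => P2.mono k (P1.mono k hk)) (by
        intro p x hc
        rcases List.mem_append.1 hc with hc | hc
        · obtain ⟨ha, hb | hb⟩ := P1.calls p x hc
          · exact ⟨ha, Or.inl (P2.mono _ hb)⟩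
          · simp [AtResult.keys] at hb
        · obtain ⟨ha, hb⟩ := P2.calls p x hc
          exact ⟨by by_contra hne; exact P1.mono _ hne ha, hb⟩) P2.sound (by
        intro v m hfin
        obtain ⟨n2, hE2, hmn, h21, h22, h23⟩ := P2.fin v m hfin
        refine ⟨n1 + n2, n1 + n2 + 1, Ev.branch2 hA hq hF hT hE1 hE2, by omega, by omega,
          ?_, ?_, h23⟩
        · intro p x hc
          rcases List.mem_append.1 hc with hc | hc
          · obtain ⟨v', n', h, hle⟩ := h11 p x hc
            exact ⟨v', n', h, by omega⟩
          · obtain ⟨v', n', h, hle⟩ := h21 p x hc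
            exact ⟨v', n', h, by omega⟩
        · refine cnt2 h12 h22 fun p x c1 c2 => ?_
          rcases (P1.calls p x c1).2 with hb | hb
          · exact hb (P2.calls p x c2).1
          · simp [AtResult.keys] at hb)
    simpa [atRecord] using this
  | @branchBTFail A q q' q'' i j' M M1 M2 s1 s2 hM hF hT _ _ ih1 ih2 =>
    intro hA hq hs
    have hl := (hWF.1 _ hA).2.2 _ hq hF
    rw [hT] at hl
    have P1 := ih1 hA hl.1 hs
    have P2 := ih2 hA hl.2 P1.sound
    obtain ⟨n1, hE1, _, h11, h12, _⟩ := P1.fin _ _ ⟨rfl, rfl⟩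
    obtain ⟨n2, hE2, _, h21, h22, _⟩ := P2.fin _ _ ⟨rfl, rfl⟩
    have hj : min (A0.nu q) j' = j' := by
      have := hE2.bound hWF j' rfl
      rw [nu_const hWF hA hl.2 hq] at this
      omega
    rw [hj]
    have := Post.finish (A := A) (r := .failure j') (t := s1 ++ s2) (e := .fail j') hWF hM
      (by simp) (fun k hk => P2.mono k (P1.mono k hk)) (by
        intro p x hc
        rcases List.mem_append.1 hc with hc | hc
        · obtain ⟨ha, hb | hb⟩ := P1.calls p x hc
          · exact ⟨ha, Or.inl (P2.mono _ hb)⟩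
          · simp [AtResult.keys] at hb
        · obtain ⟨ha, hb⟩ := P2.calls p x hc
          exact ⟨by by_contra hne; exact P1.mono _ hne ha, hb⟩) P2.sound (by
        rintro v m ⟨rfl, rfl⟩
        refine ⟨n1 + n2, n1 + n2 + 1, Ev.branch2 hA hq hF hT hE1 hE2, by omega, by omega,
          ?_, ?_, by simp [AtResult.keys]⟩
        · intro p x hc
          rcases List.mem_append.1 hc with hc | hc
          · obtain ⟨v', n', h, hle⟩ := h11 p x hc
            exact ⟨v', n', h, by omega⟩
          · obtain ⟨v', n', h, hle⟩ := h21 p x hc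
            exact ⟨v', n', h, by omega⟩
        · refine cnt2 h12 h22 fun p x c1 c2 => ?_
          rcases (P1.calls p x c1).2 with hb | hb
          · exact hb (P2.calls p x c2).1
          · simp [AtResult.keys] at hb)
    simpa [atFinal] using this
  | @charSucc A q q' σ i M M' r s hM hF hT hw _ ih =>
    intro hA hq hs
    have hl := (hWF.1 _ hA).2.2 _ hq hF
    rw [hT] at hl
    have P := ih hA hl hs
    refine Post.finish hWF hM (elem_ne_call r) P.mono P.calls P.sound ?_
    intro v m hfin
    obtain ⟨n, hE, hmn, h1, h2, h3⟩ := P.fin v m hfin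
    exact ⟨n, n + 1, Ev.charSucc hA hq hF hT hw hE, by omega, by omega, h1, h2, h3⟩
  | @charFail A q q' σ i M hM hF hT hw =>
    intro hA hq hs
    have := Post.finish (A := A) (r := .failure (A0.nu q)) (t := []) (e := .fail (A0.nu q)) hWF hM
      (by simp) (fun _ h => h) (by simp) hs (by
        rintro v m ⟨rfl, rfl⟩
        exact ⟨0, 1, Ev.charFail hA hq hF hT hw, by omega, by omega, by simp, by simp,
          by simp [AtResult.keys]⟩)
    simpa [atFinal] using this
  | @subSuccSucc A A' q q' i i' i'' K' K'' M M1 M2 s1 s2 hM hF hT _ _ ih1 ih2 =>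
    intro hA hq hs
    have hl := (hWF.1 _ hA).2.2 _ hq hF
    rw [hT] at hl
    have hA' := child_mem hA hq hT
    have P1 := ih1 hA' (hWF.1 _ hA').1 hs
    have P2 := ih2 hA hl P1.sound
    have := Post.finish (A := A) (r := .successAt i'' (K' ∪ K'')) (t := s1 ++ s2)
      (e := .succ i'') hWF hM
      (by simp) (fun k hk => P2.mono k (P1.mono k hk)) (by
        intro p x hc
        rcases List.mem_append.1 hc with hc | hc
        · obtain ⟨ha, hb | hb⟩ := P1.calls p x hc
          · exact ⟨ha, Or.inl (P2.mono _ hb)⟩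
          · exact ⟨ha, Or.inr (Finset.mem_union_left _ hb)⟩
        · obtain ⟨ha, hb⟩ := P2.calls p x hc
          exact ⟨by by_contra hne; exact P1.mono _ hne ha,
            hb.imp id (fun hb => Finset.mem_union_right _ hb)⟩) P2.sound (by
        intro v m hfin
        obtain ⟨n2, hE2, hmn, h21, h22, h23⟩ := P2.fin v m hfin
        obtain ⟨n1, hE1, hmn1, h11, h12, h13⟩ := P1.fin v n2
          (Or.inr ⟨A, q, q', hA, hq, hF, hT, hE2⟩)
        refine ⟨n1, n1 + 1, Ev.subLow hA hq hF hT hE1 ?_, by omega, by omega,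
          ?_, ?_, ?_⟩
        · intro j hj
          rw [nu_const hWF hA hq hl]
          exact hE2.bound hWF j hj
        · intro p x hc
          rcases List.mem_append.1 hc with hc | hc
          · exact h11 p x hc
          · obtain ⟨v', n', h, hle⟩ := h21 p x hc
            exact ⟨v', n', h, by omega⟩
        · refine cnt2 h12 h22 fun p x c1 c2 => ?_
          rcases (P1.calls p x c1).2 with hb | hb
          · exact hb (P2.calls p x c2).1
          · obtain ⟨n', h, hlt⟩ := h13 _ hb
            obtain ⟨v'', n'', h', hle⟩ := h21 p x c2
            have := (h.det hWF h').2
            omega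
        · intro c hc
          rcases Finset.mem_union.1 hc with hc | hc
          · obtain ⟨n', h, hlt⟩ := h13 c hc
            exact ⟨n', h, by omega⟩
          · exact h23 c hc)
    simpa [atRecord] using this
  | @subSuccFail A A' q q' i i' j K' M M1 M2 s1 s2 hM hF hT _ _ ih1 ih2 =>
    intro hA hq hs
    have hl := (hWF.1 _ hA).2.2 _ hq hF
    rw [hT] at hl
    have hA' := child_mem hA hq hT
    have P1 := ih1 hA' (hWF.1 _ hA').1 hs
    have P2 := ih2 hA hl P1.sound
    obtain ⟨n2, hE2, hmn, h21, h22, h23⟩ := P2.fin _ _ ⟨rfl, rfl⟩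
    obtain ⟨n1, hE1, hmn1, h11, h12, h13⟩ := P1.fin _ n2
      (Or.inr ⟨A, q, q', hA, hq, hF, hT, hE2⟩)
    have hb2 : ∀ k, M2 k ≠ none → atBatch M2 K' j k ≠ none := by
      intro k hk
      simp only [atBatch]
      split <;> simp [hk]
    have := Post.finish (A := A) (r := .failure j) (t := s1 ++ s2) (M1 := atBatch M2 K' j)
      (e := .fail j) hWF hM
      (by simp) (fun k hk => hb2 k (P2.mono k (P1.mono k hk))) (by
        intro p x hc
        rcases List.mem_append.1 hc with hc | hc
        · obtain ⟨ha, hb | hb⟩ := P1.calls p x hc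
          · exact ⟨ha, Or.inl (hb2 _ (P2.mono _ hb))⟩
          · have hb : (p, x) ∈ K' := hb
            exact ⟨ha, Or.inl (by simp [atBatch, hb])⟩
        · obtain ⟨ha, hb⟩ := P2.calls p x hc
          exact ⟨by by_contra hne; exact P1.mono _ hne ha,
            hb.imp (hb2 _) id⟩) (by
        intro p x j' h
        simp only [atBatch] at h
        split at h
        · rename_i hk
          injection h with h
          subst h
          obtain ⟨n', h, _⟩ := h13 _ hk
          exact ⟨n', h⟩
        · exact P2.sound p x j' h) (by
        rintro v m ⟨rfl, rfl⟩
        refine ⟨n1, n1 + 1, Ev.subLow hA hq hF hT hE1 ?_, by omega, by omega,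
          ?_, ?_, by simp [AtResult.keys]⟩
        · intro j hj
          rw [nu_const hWF hA hq hl]
          exact hE2.bound hWF j hj
        · intro p x hc
          rcases List.mem_append.1 hc with hc | hc
          · exact h11 p x hc
          · obtain ⟨v', n', h, hle⟩ := h21 p x hc
            exact ⟨v', n', h, by omega⟩
        · refine cnt2 h12 h22 fun p x c1 c2 => ?_
          rcases (P1.calls p x c1).2 with hb | hb
          · exact hb (P2.calls p x c2).1
          · obtain ⟨n', h, hlt⟩ := h13 _ hb
            obtain ⟨v'', n'', h', hle⟩ := h21 p x c2
            have := (h.det hWF h').2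
            omega)
    simpa [atFinal] using this
  | @subFailHigh A A' q q' i j M M1 s1 hM hF hT _ hj ih =>
    intro hA hq hs
    have hA' := child_mem hA hq hT
    have P := ih hA' (hWF.1 _ hA').1 hs
    obtain ⟨n, hE, hmn, h1, h2, h3⟩ := P.fin _ _ ⟨rfl, rfl⟩
    refine Post.finish (A := A) (r := .failure (A0.nu q)) hWF hM (by simp) P.mono P.calls
      P.sound ?_
    rintro v m ⟨rfl, rfl⟩
    exact ⟨n, n + 1, Ev.subHigh hA hq hF hT hE hj, by omega, by omega, h1, h2,
      by simp [AtResult.keys]⟩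
  | @subFailLow A A' q q' i j M M1 s1 hM hF hT _ hj ih =>
    intro hA hq hs
    have hA' := child_mem hA hq hT
    have P := ih hA' (hWF.1 _ hA').1 hs
    obtain ⟨n, hE, hmn, h1, h2, h3⟩ := P.fin _ _ ⟨rfl, rfl⟩
    refine Post.finish (A := A) (r := .failure j) hWF hM (by simp) P.mono P.calls
      P.sound ?_
    rintro v m ⟨rfl, rfl⟩
    refine ⟨n, n + 1, Ev.subLow hA hq hF hT hE ?_, by omega, by omega, h1, h2,
      by simp [AtResult.keys]⟩
    intro j' hj'
    injection hj' with hj'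
    omega

/-- **Lemma 12** (each (state, position) pair is executed at most once by `Memo-at`):
for every run `s` of an execution of `Memo-at`, every state `q ∈ P0`, and every
position `i ∈ {0, …, |w|}`, the element `C(q, i)` appears at most once in `s`. -/
theorem memoAt_call_once {Sigma S : Type} [DecidableEq S]
    (A : SubNFA Sigma S) (hWF : A.WF) (hAt : A.IsAtNFA) (hLoop : A.NoEpsLoops)
    (w : List Sigma) (i0 : ℕ) (hi0 : i0 ≤ w.length)
    {M' : S × ℕ → Option ℕ} {r : AtResult S} {s : List (AtRunElem S)}
    (hrun : MemoAtRun A w A A.q0 i0 (fun _ => none) M' r s)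
    (q : S) (hq : q ∈ A.allStates) (i : ℕ) (hi : i ≤ w.length) :
    s.count (AtRunElem.call q i) ≤ 1 := by
  have hA : A ∈ A.comps := by
    rw [(comps_perm A).mem_iff]
    exact List.mem_cons_self
  have P := memoAt_post hWF hrun hA (hWF.1 _ hA).1 (by intro p x j h; cases h)
  have hex : ∃ v m, AfterRes A w A r v m := by
    cases r with
    | successAt i' K => exact ⟨none, 0, Or.inl ⟨rfl, rfl, rfl⟩⟩
    | failure j => exact ⟨some j, 0, rfl, rfl⟩
  obtain ⟨v, m, hvm⟩ := hex
  obtain ⟨n, _, _, _, h, _⟩ := P.fin v m hvm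
  exact h q i

end RegexMemo
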